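/- arXiv:math-ph/0703046 — 2 statements merged into one kernel-verified Lean document; each statement's English description precedes it below -/
import Mathlib

section
/- Let μ be a continuous non-negative function on [0,1], not identically zero, twice continuously differentiable, with μ(1) ≠ 0, and let λ > 0. Suppose u : [0,∞) → ℝ is continuous, satisfies |u(t)| ≤ M e^{ct} for some constants M, c > 0, and its Laplace transform satisfies ∫₀^∞ e^{−pt} u(t) dt = K(p)/(p K(p) − λ) for all sufficiently large real p (note p K(p) → ∞ as p → ∞, so p K(p) − λ > 0 for large p). Then u is non-decreasing on [0,∞) and u(t) ≥ 1 for all t ≥ 0. -/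
open MeasureTheory Filter Set

/-- `K(p) = ∫₀¹ p^{α-1} μ(α) dα` for real `p > 0`. -/
noncomputable def Kreal (μ : ℝ → ℝ) (p : ℝ) : ℝ :=
  ∫ α in (0:ℝ)..1, p ^ (α - 1) * μ α

/-!
Writing `û` for the Laplace transform of `u`, the hypothesis says `p û(p) = 1 + λ / (p K(p) - λ)`.
The derivative of `p K(p) = ∫ p ^ α μ(α) dα` is `∫ p ^ (α - 1) α μ(α) dα`, which is completely
monotone, and the reciprocal of a positive function with completely monotone derivative is again
completely monotone. Hence `p û(p)` is completely monotone and at least `1` for large `p`.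

Post–Widder inversion recovers `u(t)` as the limit of `pⁿ⁺¹ / n! * (-1)ⁿ û⁽ⁿ⁾(p)` at
`p = n / t + b`, the shift by `b` keeping `p` in the half-line of absolute convergence. The
inequalities `(n + 1) (-1)ⁿ û⁽ⁿ⁾(p) ≤ p (-1)ⁿ⁺¹ û⁽ⁿ⁺¹⁾(p)` expressing complete monotonicity of
`p û(p)` make these approximants decrease in `p` and increase in `n`. As `p` decreases when `t`
grows, the limit `u` is monotone; comparison with the approximant `p û(p) ≥ 1` at `n = 0` gives
`u ≥ 1`.
-/

open scoped Topology ContDiff Pointwise Nat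

section AbsolutelyMonotone

theorem iteratedDerivWithin_eqOn_of_hasDerivAt_succ {𝕜 E : Type*} [NontriviallyNormedField 𝕜]
    [NormedAddCommGroup E] [NormedSpace 𝕜 E] {s : Set 𝕜} {f : ℕ → 𝕜 → E} (hs : IsOpen s)
    (hf : ∀ n, ∀ x ∈ s, HasDerivAt (f n) (f (n + 1) x) x) (n : ℕ) :
    EqOn (iteratedDerivWithin n (f 0) s) (f n) s := by
  induction n with
  | zero => exact fun x _ ↦ congrFun iteratedDerivWithin_zero x
  | succ n ih =>
    intro x hx
    rw [iteratedDerivWithin_succ, derivWithin_congr ih (ih hx)]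
    exact (hf n x hx).hasDerivWithinAt.derivWithin (hs.uniqueDiffWithinAt hx)

theorem absolutelyMonotoneOn_iff_of_hasDerivAt_succ {s : Set ℝ} {f : ℕ → ℝ → ℝ} (hs : IsOpen s)
    (hf : ∀ n, ∀ x ∈ s, HasDerivAt (f n) (f (n + 1) x) x) :
    AbsolutelyMonotoneOn (f 0) s ↔ ∀ n, ∀ x ∈ s, 0 ≤ f n x := by
  have hD := iteratedDerivWithin_eqOn_of_hasDerivAt_succ hs hf
  have hsmooth : ContDiffOn ℝ ∞ (f 0) s := contDiffOn_of_differentiableOn_deriv fun n _ ↦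
    DifferentiableOn.congr (fun x hx ↦ (hf n x hx).differentiableAt.differentiableWithinAt) (hD n)
  rw [AbsolutelyMonotoneOn.iff_iteratedDerivWithin_nonneg hs.uniqueDiffOn, and_iff_right hsmooth]
  exact forall_congr' fun n ↦ forall₂_congr fun x hx ↦ by rw [hD n hx]

variable {f g : ℝ → ℝ} {s : Set ℝ}

theorem iteratedDerivWithin_mul_nonneg {x : ℝ} {n : ℕ} (hs : UniqueDiffOn ℝ s) (hx : x ∈ s)
    (hf : ContDiffWithinAt ℝ n f s x) (hg : ContDiffWithinAt ℝ n g s x)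
    (hf₀ : ∀ k ≤ n, 0 ≤ iteratedDerivWithin k f s x)
    (hg₀ : ∀ k ≤ n, 0 ≤ iteratedDerivWithin k g s x) :
    0 ≤ iteratedDerivWithin n (f * g) s x := by
  rw [iteratedDerivWithin_mul hx hs hf hg]
  refine Finset.sum_nonneg fun k hk ↦ ?_
  have hkn : k ≤ n := Nat.lt_succ_iff.mp (Finset.mem_range.mp hk)
  have hfk := hf₀ k hkn
  have hgk := hg₀ (n - k) (Nat.sub_le n k)
  positivity

-- Since `(1 / f)' = g * (1 / f)²`, the Leibniz rule carries nonnegativity from orders up to `n` to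
-- order `n + 1`.
theorem absolutelyMonotoneOn_inv (hs : UniqueDiffOn ℝ s) (hpos : ∀ x ∈ s, 0 < f x)
    (hderiv : ∀ x ∈ s, HasDerivWithinAt f (-g x) s x) (hg : AbsolutelyMonotoneOn g s) :
    AbsolutelyMonotoneOn f⁻¹ s := by
  have hf_smooth : ContDiffOn ℝ ∞ f s := by
    refine (contDiffOn_infty_iff_derivWithin hs).2
      ⟨fun x hx ↦ (hderiv x hx).differentiableWithinAt, hg.contDiffOn.neg.congr fun x hx ↦ ?_⟩
    exact (hderiv x hx).derivWithin (hs x hx)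
  have hinv_smooth : ContDiffOn ℝ ∞ f⁻¹ s := hf_smooth.inv fun x hx ↦ (hpos x hx).ne'
  have hinv_deriv : EqOn (derivWithin f⁻¹ s) (g * (f⁻¹ * f⁻¹)) s := fun x hx ↦ by
    have hx₀ := (hpos x hx).ne'
    rw [((hderiv x hx).inv hx₀).derivWithin (hs x hx)]
    simp only [Pi.mul_apply, Pi.inv_apply]
    field_simp
  refine (AbsolutelyMonotoneOn.iff_iteratedDerivWithin_nonneg hs).2 ⟨hinv_smooth, fun n ↦ ?_⟩
  induction n using Nat.strong_induction_on with
  | _ n ih =>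
    intro x hx
    cases n with
    | zero => simpa using (hpos x hx).le
    | succ n =>
      have hinv_n (k : ℕ) : ContDiffWithinAt ℝ k f⁻¹ s x :=
        (hinv_smooth x hx).of_le (mod_cast le_top)
      have hsq : ∀ k ≤ n, 0 ≤ iteratedDerivWithin k (f⁻¹ * f⁻¹) s x := fun k hk ↦
        iteratedDerivWithin_mul_nonneg hs hx (hinv_n k) (hinv_n k)
          (fun j hj ↦ ih j (by lia) x hx) (fun j hj ↦ ih j (by lia) x hx)
      rw [iteratedDerivWithin_succ', iteratedDerivWithin_congr hinv_deriv hx]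
      exact iteratedDerivWithin_mul_nonneg hs hx ((hg.contDiffOn x hx).of_le (mod_cast le_top))
        ((hinv_n n).mul (hinv_n n)) (fun k _ ↦ hg.iteratedDerivWithin_nonneg hs k hx) hsq

end AbsolutelyMonotone

/-- A function is *completely monotone* on `s` if `(-1)ⁿ f⁽ⁿ⁾ ≥ 0` on `s` for every `n`. This is
encoded as absolute monotonicity of the reflected function, which absorbs the signs. -/
def CompletelyMonotoneOn (f : ℝ → ℝ) (s : Set ℝ) : Prop :=
  AbsolutelyMonotoneOn (fun x ↦ f (-x)) (-s)

namespace CompletelyMonotoneOn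

variable {f g : ℝ → ℝ} {s : Set ℝ}

theorem congr (hf : CompletelyMonotoneOn f s) (hfg : EqOn g f s) : CompletelyMonotoneOn g s := by
  obtain ⟨P, hP, hP₀⟩ := hf
  exact ⟨P, hP.congr fun x hx ↦ hfg hx, hP₀⟩

theorem const {c : ℝ} (hc : 0 ≤ c) : CompletelyMonotoneOn (fun _ ↦ c) s :=
  AbsolutelyMonotoneOn.of_contDiff contDiff_const fun n x _ ↦ by
    rw [iteratedDeriv_const]
    split_ifs <;> simp [hc]

theorem add (hf : CompletelyMonotoneOn f s) (hg : CompletelyMonotoneOn g s) :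
    CompletelyMonotoneOn (f + g) s :=
  AbsolutelyMonotoneOn.add hf hg

theorem smul {c : ℝ} (hf : CompletelyMonotoneOn f s) (hc : 0 ≤ c) :
    CompletelyMonotoneOn (c • f) s :=
  AbsolutelyMonotoneOn.smul hf hc

theorem mono {t : Set ℝ} (hf : CompletelyMonotoneOn f t) (hst : s ⊆ t) :
    CompletelyMonotoneOn f s := by
  obtain ⟨P, hP, hP₀⟩ := hf
  exact ⟨P, hP.mono (neg_subset_neg.2 hst), fun n x hx ↦ hP₀ n (hst hx)⟩

theorem iff_of_hasDerivAt_neg_succ {f : ℕ → ℝ → ℝ} (hs : IsOpen s)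
    (hf : ∀ n, ∀ x ∈ s, HasDerivAt (f n) (-f (n + 1) x) x) :
    CompletelyMonotoneOn (f 0) s ↔ ∀ n, ∀ x ∈ s, 0 ≤ f n x := by
  have hreflect (n : ℕ) (x : ℝ) (hx : x ∈ -s) :
      HasDerivAt (fun x ↦ f n (-x)) (f (n + 1) (-x)) x := by
    simpa using! (hf n (-x) hx).scomp x (hasDerivAt_neg x)
  refine (absolutelyMonotoneOn_iff_of_hasDerivAt_succ (f := fun n x ↦ f n (-x)) hs.neg
    hreflect).trans (forall_congr' fun n ↦ ⟨fun h x hx ↦ ?_, fun h x hx ↦ h (-x) hx⟩)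
  simpa using h (-x) (neg_mem_neg.2 hx)

theorem inv_of_hasDerivAt (hs : IsOpen s) (hpos : ∀ x ∈ s, 0 < f x)
    (hderiv : ∀ x ∈ s, HasDerivAt f (g x) x) (hg : CompletelyMonotoneOn g s) :
    CompletelyMonotoneOn f⁻¹ s := by
  refine absolutelyMonotoneOn_inv (f := fun x ↦ f (-x)) hs.neg.uniqueDiffOn
    (fun x hx ↦ hpos (-x) hx) (fun x hx ↦ ?_) hg
  simpa using! ((hderiv (-x) hx).scomp x (hasDerivAt_neg x)).hasDerivWithinAt

end CompletelyMonotoneOn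

section PowerIntegral

variable {w : ℝ → ℝ} {a b β p : ℝ}

theorem intervalIntegrable_rpow_mul (hw : IntervalIntegrable w volume a b) (hp : 0 < p) (β : ℝ) :
    IntervalIntegrable (fun α ↦ p ^ (α - β) * w α) volume a b :=
  hw.continuousOn_mul <| Continuous.continuousOn <|
    continuous_const.rpow (by fun_prop) fun _ ↦ Or.inl hp.ne'

theorem hasDerivAt_integral_rpow_mul (hw : IntervalIntegrable w volume a b) (hp : 0 < p) (β : ℝ) :
    HasDerivAt (fun p ↦ ∫ α in a..b, p ^ (α - β) * w α)
      (∫ α in a..b, p ^ (α - (β + 1)) * ((α - β) * w α)) p := by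
  have hw' : IntervalIntegrable (fun α ↦ (α - β) * w α) volume a b :=
    hw.continuousOn_mul (by fun_prop)
  have hmem : Icc (p / 2) (2 * p) ∈ 𝓝 p := Icc_mem_nhds (by linarith) (by linarith)
  have hpos : ∀ x ∈ Icc (p / 2) (2 * p), 0 < x := fun x hx ↦ (half_pos hp).trans_le hx.1
  obtain ⟨C, hC⟩ := (isCompact_Icc.prod isCompact_uIcc).exists_bound_of_continuousOn
    (f := fun z : ℝ × ℝ ↦ z.1 ^ (z.2 - (β + 1))) (s := Icc (p / 2) (2 * p) ×ˢ uIcc a b)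
    (ContinuousOn.rpow (by fun_prop) (by fun_prop) fun z hz ↦ Or.inl (hpos z.1 hz.1).ne')
  refine (intervalIntegral.hasDerivAt_integral_of_dominated_loc_of_deriv_le hmem
    (F' := fun x α ↦ x ^ (α - (β + 1)) * ((α - β) * w α))
    (bound := fun α ↦ C * ‖(α - β) * w α‖) ?_ (intervalIntegrable_rpow_mul hw hp β)
    (intervalIntegrable_rpow_mul hw' hp _).def'.aestronglyMeasurable ?_
    (hw'.norm.const_mul C) ?_).2
  · filter_upwards [lt_mem_nhds hp] with x hx
    exact (intervalIntegrable_rpow_mul hw hx β).def'.aestronglyMeasurable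
  · refine .of_forall fun α hα x hx ↦ ?_
    rw [norm_mul]
    gcongr
    exact hC (x, α) ⟨hx, uIoc_subset_uIcc hα⟩
  · refine .of_forall fun α _ x hx ↦ ?_
    refine ((Real.hasDerivAt_rpow_const (.inl (hpos x hx).ne')).mul_const (w α)).congr_deriv ?_
    rw [← sub_sub]
    ring

theorem completelyMonotoneOn_integral_rpow_mul (hab : a ≤ b) (hbβ : b ≤ β)
    (hw : IntervalIntegrable w volume a b) (hw₀ : ∀ α ∈ Icc a b, 0 ≤ w α) :
    CompletelyMonotoneOn (fun p ↦ ∫ α in a..b, p ^ (α - β) * w α) (Ioi 0) := by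
  let v (n : ℕ) (α : ℝ) : ℝ := (∏ k ∈ Finset.range n, (β + k - α)) * w α
  have hv (n : ℕ) : IntervalIntegrable (v n) volume a b := hw.continuousOn_mul (by fun_prop)
  have hv₀ (n : ℕ) (α : ℝ) (hα : α ∈ Icc a b) : 0 ≤ v n α := by
    refine mul_nonneg (Finset.prod_nonneg fun k _ ↦ ?_) (hw₀ α hα)
    have := hα.2
    have : (0 : ℝ) ≤ k := k.cast_nonneg
    linarith
  have hderiv (n : ℕ) (p : ℝ) (hp : p ∈ Ioi 0) :
      HasDerivAt (fun p ↦ ∫ α in a..b, p ^ (α - (β + n)) * v n α)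
        (-∫ α in a..b, p ^ (α - (β + (n + 1 : ℕ))) * v (n + 1) α) p := by
    convert hasDerivAt_integral_rpow_mul (hv n) hp (β + n) using 1
    rw [← intervalIntegral.integral_neg]
    congr 1 with α
    simp only [v, Finset.prod_range_succ, Nat.cast_add, Nat.cast_one, add_assoc]
    ring
  have hCM := (CompletelyMonotoneOn.iff_of_hasDerivAt_neg_succ isOpen_Ioi hderiv).2
    fun n p hp ↦ intervalIntegral.integral_nonneg hab fun α hα ↦
      mul_nonneg (Real.rpow_nonneg (le_of_lt hp) _) (hv₀ n α hα)
  simpa [v] using hCM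

theorem tendsto_integral_rpow_mul_atTop (hb : 0 ≤ b) (hw : IntervalIntegrable w volume 0 b)
    (hw₀ : ∀ α ∈ Icc 0 b, 0 ≤ w α) (hpos : 0 < ∫ α in 0..b, w α) :
    Tendsto (fun p ↦ ∫ α in 0..b, p ^ α * w α) atTop atTop := by
  have hb' : 0 < b := hb.lt_of_ne fun h ↦ by simp [← h] at hpos
  obtain ⟨δ, ⟨hδ₀, hδb⟩, hδ⟩ : ∃ δ ∈ Ioo 0 b, 0 < ∫ α in δ..b, w α := by
    have hcont : ContinuousWithinAt (fun x ↦ ∫ α in x..b, w α) (Ioo 0 b) 0 :=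
      ((intervalIntegral.continuousOn_primitive_interval_left
        ((intervalIntegrable_iff' (by finiteness)).1 hw)) 0 left_mem_uIcc).mono
        (Ioo_subset_Icc_self.trans Icc_subset_uIcc)
    have : (𝓝[Ioo 0 b] (0 : ℝ)).NeBot := left_nhdsWithin_Ioo_neBot hb'
    exact ((eventually_mem_nhdsWithin).and (hcont.eventually_const_lt hpos)).exists
  refine tendsto_atTop_mono' atTop ?_ ((tendsto_rpow_atTop hδ₀).atTop_mul_const hδ)
  filter_upwards [eventually_ge_atTop 1] with p hp
  have hp₀ : 0 < p := by linarith
  have hint : IntervalIntegrable (fun α ↦ p ^ α * w α) volume 0 b := by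
    simpa using intervalIntegrable_rpow_mul hw hp₀ 0
  have hsub : uIcc δ b ⊆ uIcc 0 b := by
    rw [uIcc_of_le hδb.le, uIcc_of_le hb]
    exact Icc_subset_Icc_left hδ₀.le
  calc p ^ δ * ∫ α in δ..b, w α = ∫ α in δ..b, p ^ δ * w α :=
        (intervalIntegral.integral_const_mul _ _).symm
    _ ≤ ∫ α in δ..b, p ^ α * w α := by
        refine intervalIntegral.integral_mono_on hδb.le ((hw.mono_set hsub).const_mul _)
          (hint.mono_set hsub) fun α hα ↦ ?_
        have := hw₀ α ⟨hδ₀.le.trans hα.1, hα.2⟩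
        gcongr
        exact hα.1
    _ ≤ ∫ α in 0..b, p ^ α * w α := by
        refine intervalIntegral.integral_mono_interval hδ₀.le hδb.le le_rfl ?_ hint
        filter_upwards [ae_restrict_mem measurableSet_Ioc] with α hα
        exact mul_nonneg (by positivity) (hw₀ α (Ioc_subset_Icc_self hα))

end PowerIntegral

section Kreal

variable {μ : ℝ → ℝ} {p : ℝ}

theorem mul_Kreal_eq_integral (hp : 0 < p) : p * Kreal μ p = ∫ α in (0 : ℝ)..1, p ^ α * μ α := by
  rw [Kreal, ← intervalIntegral.integral_const_mul]
  congr 1 with α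
  rw [Real.rpow_sub_one hp.ne']
  field_simp

theorem hasDerivAt_mul_Kreal (hμ : IntervalIntegrable μ volume 0 1) (hp : 0 < p) :
    HasDerivAt (fun p ↦ p * Kreal μ p) (Kreal (fun α ↦ α * μ α) p) p := by
  have h := hasDerivAt_integral_rpow_mul hμ hp 0
  simp only [sub_zero, zero_add] at h
  refine h.congr_of_eventuallyEq ?_
  filter_upwards [lt_mem_nhds hp] with q hq using mul_Kreal_eq_integral hq

theorem completelyMonotoneOn_Kreal (hμ : IntervalIntegrable μ volume 0 1)
    (hμ₀ : ∀ α ∈ Icc (0 : ℝ) 1, 0 ≤ μ α) : CompletelyMonotoneOn (Kreal μ) (Ioi 0) :=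
  completelyMonotoneOn_integral_rpow_mul zero_le_one le_rfl hμ hμ₀

theorem tendsto_mul_Kreal_atTop (hμ : IntervalIntegrable μ volume 0 1)
    (hμ₀ : ∀ α ∈ Icc (0 : ℝ) 1, 0 ≤ μ α) (hpos : 0 < ∫ α in (0 : ℝ)..1, μ α) :
    Tendsto (fun p ↦ p * Kreal μ p) atTop atTop := by
  refine (tendsto_integral_rpow_mul_atTop zero_le_one hμ hμ₀ hpos).congr' ?_
  filter_upwards [eventually_gt_atTop 0] with p hp using (mul_Kreal_eq_integral hp).symm

theorem completelyMonotoneOn_mul_Kreal_div {lam a : ℝ} (hμ : IntervalIntegrable μ volume 0 1)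
    (hμ₀ : ∀ α ∈ Icc (0 : ℝ) 1, 0 ≤ μ α) (hlam : 0 ≤ lam) (ha : 0 ≤ a)
    (hK : ∀ p ∈ Ioi a, lam < p * Kreal μ p) :
    CompletelyMonotoneOn (fun p ↦ p * Kreal μ p / (p * Kreal μ p - lam)) (Ioi a) := by
  have hsub : Ioi a ⊆ Ioi 0 := Ioi_subset_Ioi ha
  have hderiv : CompletelyMonotoneOn (Kreal fun α ↦ α * μ α) (Ioi 0) :=
    completelyMonotoneOn_Kreal (hμ.continuousOn_mul continuousOn_id)
      fun α hα ↦ mul_nonneg hα.1 (hμ₀ α hα)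
  have hinv : CompletelyMonotoneOn (fun p ↦ p * Kreal μ p - lam)⁻¹ (Ioi a) :=
    .inv_of_hasDerivAt isOpen_Ioi (fun p hp ↦ sub_pos.2 (hK p hp))
      (fun p hp ↦ (hasDerivAt_mul_Kreal hμ (hsub hp)).sub_const lam) (hderiv.mono hsub)
  refine ((CompletelyMonotoneOn.const zero_le_one).add (hinv.smul hlam)).congr fun p hp ↦ ?_
  have : p * Kreal μ p - lam ≠ 0 := (sub_pos.2 (hK p hp)).ne'
  simp only [Pi.add_apply, Pi.smul_apply, Pi.inv_apply, smul_eq_mul]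
  field_simp
  ring

end Kreal

section ErlangKernel

/-- The density on `[0, ∞)` of the Gamma distribution with shape `n + 1` and rate `q`, which peaks
at `n / q`. Unlike `ProbabilityTheory.gammaPDFReal`, it is written with natural powers. -/
noncomputable def erlangKernel (n : ℕ) (q s : ℝ) : ℝ :=
  q ^ (n + 1) / n ! * (s ^ n * Real.exp (-q * s))

theorem continuous_erlangKernel (n : ℕ) (q : ℝ) : Continuous (erlangKernel n q) := by
  unfold erlangKernel
  fun_prop

theorem erlangKernel_nonneg {q s : ℝ} (hq : 0 ≤ q) (hs : 0 ≤ s) (n : ℕ) :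
    0 ≤ erlangKernel n q s := by
  unfold erlangKernel
  positivity

theorem integrableOn_pow_mul_exp_neg {q : ℝ} (hq : 0 < q) (n : ℕ) :
    IntegrableOn (fun s ↦ s ^ n * Real.exp (-q * s)) (Ioi 0) := by
  have hn : (-1 : ℝ) < n := neg_one_lt_zero.trans_le n.cast_nonneg
  simpa using integrableOn_rpow_mul_exp_neg_mul_rpow hn one_pos hq

theorem integral_erlangKernel {q : ℝ} (hq : 0 < q) (n : ℕ) :
    ∫ s in Ioi 0, erlangKernel n q s = 1 := by
  have hGamma := Real.integral_rpow_mul_exp_neg_mul_Ioi (a := n + 1) (by positivity) hq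
  rw [Real.Gamma_nat_eq_factorial] at hGamma
  simp only [add_sub_cancel_right, Real.rpow_natCast, ← neg_mul] at hGamma
  simp only [erlangKernel]
  rw [integral_const_mul, hGamma, ← Nat.cast_add_one, Real.rpow_natCast, one_div, inv_pow]
  field_simp

-- Squaring `(1 + x) / 2 ≤ e ^ ((x - 1) / 2)` bounds `x e ^ (1 - x)` by `4 x / (1 + x)²`, which is
-- `1` minus a square.
theorem mul_exp_one_sub_le {x δ : ℝ} (hx : 0 ≤ x) (hδ : 0 ≤ δ) (hδx : δ ≤ |x - 1|) :
    x * Real.exp (1 - x) ≤ 1 - (δ / (δ + 2)) ^ 2 := by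
  have hexp : Real.exp (1 - x) ≤ 4 / (1 + x) ^ 2 := by
    have h := Real.add_one_le_exp ((x - 1) / 2)
    have hsq : ((1 + x) / 2) ^ 2 ≤ Real.exp (x - 1) := by
      calc ((1 + x) / 2) ^ 2 ≤ Real.exp ((x - 1) / 2) ^ 2 := by gcongr; linarith
        _ = Real.exp (x - 1) := by rw [← Real.exp_nat_mul]; push_cast; ring_nf
    rw [← neg_sub, Real.exp_neg, ← inv_div]
    gcongr
    linarith [hsq, div_pow (1 + x) 2 2]
  have hratio : δ / (δ + 2) ≤ |x - 1| / (1 + x) := by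
    have : 1 + x ≤ |x - 1| + 2 := by linarith [le_abs_self (x - 1)]
    rw [div_le_div_iff₀ (by positivity) (by positivity)]
    nlinarith
  calc x * Real.exp (1 - x) ≤ x * (4 / (1 + x) ^ 2) := by gcongr
    _ = 1 - (|x - 1| / (1 + x)) ^ 2 := by rw [div_pow, sq_abs]; field_simp; ring
    _ ≤ 1 - (δ / (δ + 2)) ^ 2 := by gcongr

theorem erlangKernel_le {n : ℕ} {s t : ℝ} (ht : 0 < t) (hs : 0 ≤ s) :
    erlangKernel n (n / t) s ≤ n / t * (s / t * Real.exp (1 - s / t)) ^ n := by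
  have hfact : (n : ℝ) ^ n / n ! ≤ Real.exp n := Real.pow_div_factorial_le_exp _ n.cast_nonneg n
  calc erlangKernel n (n / t) s
      = n / t * (s / t) ^ n * Real.exp (-(n / t) * s) * (n ^ n / n !) := by
        rw [erlangKernel, pow_succ, div_pow, div_pow]; ring
    _ ≤ n / t * (s / t) ^ n * Real.exp (-(n / t) * s) * Real.exp n := by gcongr
    _ = n / t * (s / t * Real.exp (1 - s / t)) ^ n := by
        rw [mul_assoc, ← Real.exp_add, mul_pow, ← Real.exp_nat_mul]; ring_nf

theorem integrableOn_erlangKernel {q : ℝ} (hq : 0 < q) (n : ℕ) :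
    IntegrableOn (erlangKernel n q) (Ioi 0) :=
  (integrableOn_pow_mul_exp_neg hq n).const_mul _

-- Of the `n + 1` factors `x e ^ (1 - x)`, `n` provide the decay and the last one is kept as an
-- integrable majorant.
theorem exists_erlangKernel_le_of_le_abs {δ t : ℝ} (ht : 0 < t) (hδ : 0 < δ) :
    ∃ C : ℕ → ℝ, (∀ n, 0 ≤ C n) ∧ Tendsto C atTop (𝓝 0) ∧ ∀ n, ∀ s, 0 ≤ s → δ ≤ |s / t - 1| →
      erlangKernel (n + 1) ((n + 1 : ℕ) / t) s ≤ C n * (s / t * Real.exp (1 - s / t)) := by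
  set r : ℝ := 1 - (δ / (δ + 2)) ^ 2
  have hr₁ : r < 1 := sub_lt_self 1 (by positivity)
  have hr₀ : 0 ≤ r := by
    have : (δ / (δ + 2)) ^ 2 ≤ 1 := pow_le_one₀ (by positivity)
      ((div_le_one (by positivity)).2 (by linarith))
    exact sub_nonneg.2 this
  refine ⟨fun n ↦ (n + 1 : ℕ) / t * r ^ n, fun n ↦ by positivity, ?_, fun n s hs hδs ↦ ?_⟩
  · have hlim := ((tendsto_self_mul_const_pow_of_lt_one hr₀ hr₁).add
      (tendsto_pow_atTop_nhds_zero_of_lt_one hr₀ hr₁)).div_const t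
    rw [add_zero, zero_div] at hlim
    refine hlim.congr fun n ↦ ?_
    push_cast
    ring
  · calc erlangKernel (n + 1) ((n + 1 : ℕ) / t) s
        ≤ (n + 1 : ℕ) / t * (s / t * Real.exp (1 - s / t)) ^ (n + 1) := erlangKernel_le ht hs
      _ = (n + 1 : ℕ) / t * (s / t * Real.exp (1 - s / t)) ^ n *
            (s / t * Real.exp (1 - s / t)) := by rw [pow_succ, mul_assoc]
      _ ≤ (n + 1 : ℕ) / t * r ^ n * (s / t * Real.exp (1 - s / t)) := by
        have hle := mul_exp_one_sub_le (div_nonneg hs ht.le) hδ.le hδs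
        gcongr

theorem tendstoUniformlyOn_erlangKernel {t : ℝ} (ht : 0 < t) {v : Set ℝ} (hv : v ∈ 𝓝 t) :
    TendstoUniformlyOn (fun (n : ℕ) s ↦ erlangKernel (n + 1) ((n + 1 : ℕ) / t) s) 0 atTop
      (Ioi 0 \ v) := by
  obtain ⟨ε, hε, hball⟩ := Metric.mem_nhds_iff.1 hv
  obtain ⟨C, hC₀, hC, hle⟩ := exists_erlangKernel_le_of_le_abs ht (div_pos hε ht)
  refine Metric.tendstoUniformlyOn_iff.2 fun η hη ↦ ?_
  filter_upwards [hC.eventually_lt_const hη] with n hn s hs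
  have hs₀ : 0 ≤ s := le_of_lt hs.1
  have hfar : ε / t ≤ |s / t - 1| := by
    have : ε ≤ |s - t| := not_lt.1 fun h ↦ hs.2 (hball h)
    rw [div_sub_one ht.ne', abs_div, abs_of_pos ht]
    gcongr
  have hle_one : s / t * Real.exp (1 - s / t) ≤ 1 := by
    simpa using mul_exp_one_sub_le (div_nonneg hs₀ ht.le) le_rfl (abs_nonneg _)
  rw [Pi.zero_apply, dist_zero_left,
    Real.norm_of_nonneg (erlangKernel_nonneg (by positivity) hs₀ _)]
  calc erlangKernel (n + 1) ((n + 1 : ℕ) / t) s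
      ≤ C n * (s / t * Real.exp (1 - s / t)) := hle n s hs₀ hfar
    _ ≤ C n := mul_le_of_le_one_right (hC₀ n) hle_one
    _ < η := hn

theorem tendsto_setIntegral_Ioc_erlangKernel {t : ℝ} (ht : 0 < t) :
    Tendsto (fun n : ℕ ↦ ∫ s in Ioc 0 (2 * t), erlangKernel (n + 1) ((n + 1 : ℕ) / t) s) atTop
      (𝓝 1) := by
  obtain ⟨C, -, hC, hle⟩ := exists_erlangKernel_le_of_le_abs ht one_pos
  have ht₂ : 0 ≤ 2 * t := by positivity
  have hsub : Ioi (2 * t) ⊆ Ioi 0 := Ioi_subset_Ioi ht₂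
  have hint (n : ℕ) := integrableOn_erlangKernel (q := (n + 1 : ℕ) / t) (by positivity) (n + 1)
  have hdom : IntegrableOn (fun s ↦ s / t * Real.exp (1 - s / t)) (Ioi 0) := by
    refine ((integrableOn_pow_mul_exp_neg (inv_pos.2 ht) 1).const_mul
      (Real.exp 1 / t)).congr (.of_forall fun s ↦ ?_)
    simp only [sub_eq_add_neg, Real.exp_add]
    ring_nf
  have htail : Tendsto
      (fun n : ℕ ↦ ∫ s in Ioi (2 * t), erlangKernel (n + 1) ((n + 1 : ℕ) / t) s) atTop (𝓝 0) := by
    refine squeeze_zero (fun n ↦ setIntegral_nonneg measurableSet_Ioi fun s hs ↦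
      erlangKernel_nonneg (by positivity) (le_of_lt (hsub hs)) _) (fun n ↦ ?_)
      (by simpa using hC.mul_const (∫ s in Ioi (2 * t), s / t * Real.exp (1 - s / t)))
    rw [← integral_const_mul]
    refine setIntegral_mono_on ((hint n).mono_set hsub) ((hdom.mono_set hsub).const_mul _)
      measurableSet_Ioi fun s hs ↦ hle n s (le_of_lt (hsub hs)) ?_
    have : 2 ≤ s / t := (le_div_iff₀ ht).2 (le_of_lt hs)
    exact le_abs.2 (Or.inl (by linarith))
  have hsplit (n : ℕ) : ∫ s in Ioc 0 (2 * t), erlangKernel (n + 1) ((n + 1 : ℕ) / t) s =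
      1 - ∫ s in Ioi (2 * t), erlangKernel (n + 1) ((n + 1 : ℕ) / t) s := by
    rw [eq_sub_iff_add_eq, ← setIntegral_union (Ioc_disjoint_Ioi le_rfl) measurableSet_Ioi
      ((hint n).mono_set Ioc_subset_Ioi_self) ((hint n).mono_set hsub), Ioc_union_Ioi_eq_Ioi ht₂]
    exact integral_erlangKernel (by positivity) _
  simp only [hsplit]
  simpa only [sub_zero] using htail.const_sub 1

theorem tendsto_integral_erlangKernel_smul {E : Type*} [NormedAddCommGroup E] [NormedSpace ℝ E]
    [CompleteSpace E] {g : ℝ → E} {t : ℝ} (ht : 0 < t)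
    (hg : IntegrableOn g (Ioi 0)) (hgt : ContinuousAt g t) :
    Tendsto (fun n : ℕ ↦ ∫ s in Ioi 0, erlangKernel n (n / t) s • g s) atTop (𝓝 (g t)) := by
  rw [← tendsto_add_atTop_iff_nat 1]
  refine tendsto_setIntegral_peak_smul_of_integrableOn_of_tendsto
    (t := Ioc 0 (2 * t)) measurableSet_Ioi measurableSet_Ioc Ioc_subset_Ioi_self
    (mem_nhdsWithin_of_mem_nhds (Ioc_mem_nhds ht (by linarith))) measure_Ioc_lt_top.ne
    (.of_forall fun n s hs ↦ erlangKernel_nonneg (by positivity) (le_of_lt hs) _)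
    (fun v hv htv ↦ tendstoUniformlyOn_erlangKernel ht (hv.mem_nhds htv))
    (tendsto_setIntegral_Ioc_erlangKernel ht)
    (.of_forall fun n ↦ (continuous_erlangKernel _ _).aestronglyMeasurable) hg
    (hgt.mono_left nhdsWithin_le_nhds)

end ErlangKernel

section LaplaceMoment

variable {E : Type*} [NormedAddCommGroup E] [NormedSpace ℝ E]

/-- The Laplace transform of `tⁿ u(t)`, that is, `(-1)ⁿ` times the `n`-th derivative of the Laplace
transform of `u`. -/
noncomputable def laplaceMoment (u : ℝ → E) (n : ℕ) (p : ℝ) : E :=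
  ∫ t in Ioi (0 : ℝ), (t ^ n * Real.exp (-p * t)) • u t

theorem pow_mul_exp_neg_le {q t : ℝ} (hq : 0 < q) (ht : 0 ≤ t) (n : ℕ) :
    t ^ n * Real.exp (-q * t) ≤ n ! / q ^ n := by
  have h := Real.pow_div_factorial_le_exp _ (mul_nonneg hq.le ht) n
  rw [div_le_iff₀ (by positivity), mul_pow] at h
  rw [neg_mul, Real.exp_neg, ← div_eq_mul_inv, div_le_div_iff₀ (by positivity) (by positivity)]
  linarith

variable {u : ℝ → E} {b p : ℝ}

theorem integrableOn_exp_neg_mul_smul_of_norm_le {M c : ℝ}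
    (hu : AEStronglyMeasurable u (volume.restrict (Ioi 0)))
    (hbound : ∀ t ∈ Ioi (0 : ℝ), ‖u t‖ ≤ M * Real.exp (c * t)) (hbc : c < b) :
    IntegrableOn (fun t ↦ Real.exp (-b * t) • u t) (Ioi 0) := by
  refine ((integrableOn_exp_mul_Ioi (sub_neg.2 hbc) 0).const_mul M).mono'
    ((by fun_prop : Continuous fun t ↦ Real.exp (-b * t)).aestronglyMeasurable.smul hu) ?_
  filter_upwards [ae_restrict_mem measurableSet_Ioi] with t ht
  calc ‖Real.exp (-b * t) • u t‖ = Real.exp (-b * t) * ‖u t‖ := by simp [norm_smul]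
    _ ≤ Real.exp (-b * t) * (M * Real.exp (c * t)) := by gcongr; exact hbound t ht
    _ = M * Real.exp ((c - b) * t) := by
      rw [mul_left_comm, ← Real.exp_add]
      ring_nf

theorem integrableOn_pow_mul_exp_neg_smul
    (hu : IntegrableOn (fun t ↦ Real.exp (-b * t) • u t) (Ioi 0)) (hp : b < p) (n : ℕ) :
    IntegrableOn (fun t ↦ (t ^ n * Real.exp (-p * t)) • u t) (Ioi 0) := by
  have hbdd : ∀ᵐ t ∂volume.restrict (Ioi (0 : ℝ)),
      ‖t ^ n * Real.exp (-(p - b) * t)‖ ≤ n ! / (p - b) ^ n := by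
    filter_upwards [ae_restrict_mem measurableSet_Ioi] with t ht
    have ht₀ : 0 < t := ht
    rw [Real.norm_of_nonneg (by positivity)]
    exact pow_mul_exp_neg_le (sub_pos.2 hp) ht₀.le n
  refine (hu.bdd_smul _ (by fun_prop) hbdd).congr (.of_forall fun t ↦ ?_)
  simp only [Pi.smul_apply', smul_smul, mul_assoc, ← Real.exp_add]
  ring_nf

theorem hasDerivAt_laplaceMoment
    (hu : IntegrableOn (fun t ↦ Real.exp (-b * t) • u t) (Ioi 0)) (hp : b < p) (n : ℕ) :
    HasDerivAt (laplaceMoment u n) (-laplaceMoment u (n + 1) p) p := by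
  obtain ⟨q, hbq, hqp⟩ := exists_between hp
  have hint {x : ℝ} (hx : b < x) (k : ℕ) := integrableOn_pow_mul_exp_neg_smul hu hx k
  rw [laplaceMoment, ← integral_neg]
  refine (hasDerivAt_integral_of_dominated_loc_of_deriv_le (Ioi_mem_nhds hqp)
    (F := fun x t ↦ (t ^ n * Real.exp (-x * t)) • u t)
    (F' := fun x t ↦ -((t ^ (n + 1) * Real.exp (-x * t)) • u t))
    (bound := fun t ↦ ‖(t ^ (n + 1) * Real.exp (-q * t)) • u t‖) ?_ (hint hp n)
    (hint hp (n + 1)).aestronglyMeasurable.neg ?_ (hint hbq (n + 1)).norm ?_).2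
  · filter_upwards [lt_mem_nhds hp] with x hx using (hint hx n).aestronglyMeasurable
  · filter_upwards [ae_restrict_mem measurableSet_Ioi] with t ht x hx
    have ht₀ : 0 < t := ht
    have hx₀ : q < x := hx
    rw [norm_neg, norm_smul, norm_smul, Real.norm_of_nonneg (by positivity),
      Real.norm_of_nonneg (by positivity)]
    gcongr
  · refine .of_forall fun t x _ ↦ ?_
    have hlin : HasDerivAt (fun x : ℝ ↦ -x * t) (-t) x := by
      simpa using (hasDerivAt_neg x).mul_const t
    refine ((hlin.exp.const_mul (t ^ n)).smul_const (u t)).congr_deriv ?_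
    rw [← neg_smul]
    ring_nf

/-- The `n`-th Post–Widder approximant `pⁿ⁺¹ / n! * (-1)ⁿ f⁽ⁿ⁾(p)` built from the Laplace transform
`f` of `u`; along `p = n / t` it inverts the Laplace transform at `t`. -/
noncomputable def postWidder (u : ℝ → E) (n : ℕ) (p : ℝ) : E :=
  (p ^ (n + 1) / n !) • laplaceMoment u n p

theorem postWidder_eq_integral_erlangKernel_smul (u : ℝ → E) (n : ℕ) (hpb : p ≠ b) :
    postWidder u n p = (p / (p - b)) ^ (n + 1) •
      ∫ s in Ioi 0, erlangKernel n (p - b) s • Real.exp (-b * s) • u s := by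
  have : p - b ≠ 0 := sub_ne_zero.2 hpb
  rw [postWidder, laplaceMoment, ← integral_smul, ← integral_smul]
  congr 1 with s
  have hexp : Real.exp (-p * s) = Real.exp (-(p - b) * s) * Real.exp (-b * s) := by
    rw [← Real.exp_add]
    ring_nf
  simp only [erlangKernel, smul_smul, hexp]
  congr 1
  rw [div_pow]
  field_simp

theorem tendsto_postWidder [CompleteSpace E] {t : ℝ} (ht : 0 < t)
    (hu : IntegrableOn (fun s ↦ Real.exp (-b * s) • u s) (Ioi 0)) (hut : ContinuousAt u t) :
    Tendsto (fun n : ℕ ↦ postWidder u n (n / t + b)) atTop (𝓝 (u t)) := by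
  have hkernel := tendsto_integral_erlangKernel_smul ht hu (by fun_prop)
  have hfactor : Tendsto (fun n : ℕ ↦ (1 + b * t / n) ^ (n + 1)) atTop (𝓝 (Real.exp (b * t))) := by
    have hbase : Tendsto (fun n : ℕ ↦ 1 + b * t / n) atTop (𝓝 1) := by
      simpa using (tendsto_const_div_atTop_nhds_zero_nat (b * t)).const_add 1
    simpa [pow_succ] using (Real.tendsto_one_add_div_pow_exp (b * t)).mul hbase
  have hlim := hfactor.smul hkernel
  rw [smul_smul, ← Real.exp_add, neg_mul, add_neg_cancel, Real.exp_zero, one_smul] at hlim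
  refine hlim.congr' ?_
  filter_upwards [eventually_ne_atTop 0] with n hn
  rw [postWidder_eq_integral_erlangKernel_smul (b := b) u n (by simp [hn, ht.ne']),
    add_sub_cancel_right]
  congr 2
  field_simp

end LaplaceMoment

section CompletelyMonotoneTransform

variable {u : ℝ → ℝ} {a b p : ℝ}

-- At `n = 0` the truncated `n - 1` is multiplied by zero.
theorem hasDerivAt_mul_laplaceMoment_sub
    (hu : IntegrableOn (fun t ↦ Real.exp (-b * t) * u t) (Ioi 0)) (hp : b < p) (n : ℕ) :
    HasDerivAt (fun p ↦ p * laplaceMoment u n p - n * laplaceMoment u (n - 1) p)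
      (-(p * laplaceMoment u (n + 1) p - (n + 1 : ℕ) * laplaceMoment u n p)) p := by
  refine (((hasDerivAt_id p).mul (hasDerivAt_laplaceMoment hu hp n)).sub
    ((hasDerivAt_laplaceMoment hu hp (n - 1)).const_mul (n : ℝ))).congr_deriv ?_
  cases n <;> simp <;> ring

theorem succ_mul_laplaceMoment_le
    (hu : IntegrableOn (fun t ↦ Real.exp (-b * t) * u t) (Ioi 0)) (hba : b ≤ a)
    (hCM : CompletelyMonotoneOn (fun p ↦ p * laplaceMoment u 0 p) (Ioi a)) (hp : p ∈ Ioi a)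
    (n : ℕ) : (n + 1) * laplaceMoment u n p ≤ p * laplaceMoment u (n + 1) p := by
  have hnonneg := (CompletelyMonotoneOn.iff_of_hasDerivAt_neg_succ isOpen_Ioi fun n q hq ↦
    hasDerivAt_mul_laplaceMoment_sub hu (hba.trans_lt hq) n).1 (by simpa using hCM)
  simpa using hnonneg (n + 1) p hp

theorem antitoneOn_postWidder
    (hu : IntegrableOn (fun t ↦ Real.exp (-b * t) * u t) (Ioi 0)) (hba : b ≤ a) (ha : 0 ≤ a)
    (hCM : CompletelyMonotoneOn (fun p ↦ p * laplaceMoment u 0 p) (Ioi a)) (n : ℕ) :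
    AntitoneOn (postWidder u n) (Ioi a) := by
  have hderiv (p : ℝ) (hp : p ∈ Ioi a) : HasDerivAt (postWidder u n)
      (p ^ n / n ! * ((n + 1) * laplaceMoment u n p - p * laplaceMoment u (n + 1) p)) p := by
    refine (((hasDerivAt_pow (n + 1) p).div_const (n ! : ℝ)).mul
      (hasDerivAt_laplaceMoment hu (hba.trans_lt hp) n)).congr_deriv ?_
    push_cast
    ring
  refine antitoneOn_of_hasDerivWithinAt_nonpos (convex_Ioi a)
    (fun p hp ↦ (hderiv p hp).continuousAt.continuousWithinAt)
    (fun p hp ↦ (hderiv p (interior_subset hp)).hasDerivWithinAt) fun p hp ↦ ?_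
  have hpa : p ∈ Ioi a := interior_subset hp
  have hp₀ : 0 ≤ p := ha.trans (le_of_lt hpa)
  exact mul_nonpos_of_nonneg_of_nonpos (by positivity)
    (sub_nonpos.2 (succ_mul_laplaceMoment_le hu hba hCM hpa n))

theorem monotone_postWidder
    (hu : IntegrableOn (fun t ↦ Real.exp (-b * t) * u t) (Ioi 0)) (hba : b ≤ a) (ha : 0 ≤ a)
    (hCM : CompletelyMonotoneOn (fun p ↦ p * laplaceMoment u 0 p) (Ioi a)) (hp : p ∈ Ioi a) :
    Monotone fun n ↦ postWidder u n p := by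
  have hp₀ : 0 ≤ p := ha.trans (le_of_lt hp)
  refine monotone_nat_of_le_succ fun n ↦ ?_
  calc postWidder u n p
      = p ^ (n + 1) / (n + 1)! * ((n + 1) * laplaceMoment u n p) := by
        rw [postWidder, smul_eq_mul, Nat.factorial_succ]
        push_cast
        field_simp
    _ ≤ p ^ (n + 1) / (n + 1)! * (p * laplaceMoment u (n + 1) p) :=
        mul_le_mul_of_nonneg_left (succ_mul_laplaceMoment_le hu hba hCM hp n) (by positivity)
    _ = postWidder u (n + 1) p := by
        rw [postWidder, smul_eq_mul]
        ring

theorem eventually_lt_natCast_div_add {t : ℝ} (ht : 0 < t) (a b : ℝ) :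
    ∀ᶠ n : ℕ in atTop, a < n / t + b :=
  (tendsto_atTop_add_const_right _ b
    (tendsto_natCast_atTop_atTop.atTop_div_const ht)).eventually_gt_atTop a

theorem monotoneOn_of_completelyMonotoneOn_mul_laplaceMoment
    (hu : IntegrableOn (fun t ↦ Real.exp (-b * t) * u t) (Ioi 0)) (hba : b ≤ a) (ha : 0 ≤ a)
    (hcont : ContinuousOn u (Ioi 0))
    (hCM : CompletelyMonotoneOn (fun p ↦ p * laplaceMoment u 0 p) (Ioi a)) :
    MonotoneOn u (Ioi 0) := by
  intro s hs t ht hst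
  have hlim {r : ℝ} (hr : r ∈ Ioi 0) :=
    tendsto_postWidder hr hu (hcont.continuousAt (Ioi_mem_nhds hr))
  refine le_of_tendsto_of_tendsto (hlim hs) (hlim ht) ?_
  filter_upwards [eventually_lt_natCast_div_add ht a b] with n hn
  have hle : n / t + b ≤ n / s + b := by
    have : 0 < s := hs
    gcongr
  exact antitoneOn_postWidder hu hba ha hCM n hn (hn.trans_le hle) hle

theorem le_of_completelyMonotoneOn_mul_laplaceMoment {m t : ℝ}
    (hu : IntegrableOn (fun t ↦ Real.exp (-b * t) * u t) (Ioi 0)) (hba : b ≤ a) (ha : 0 ≤ a)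
    (hCM : CompletelyMonotoneOn (fun p ↦ p * laplaceMoment u 0 p) (Ioi a))
    (hm : ∀ p ∈ Ioi a, m ≤ p * laplaceMoment u 0 p) (ht : 0 < t) (hut : ContinuousAt u t) :
    m ≤ u t := by
  refine ge_of_tendsto (tendsto_postWidder ht hu hut) ?_
  filter_upwards [eventually_lt_natCast_div_add ht a b] with n hn
  calc m ≤ (n / t + b) * laplaceMoment u 0 (n / t + b) := hm _ hn
    _ = postWidder u 0 (n / t + b) := by simp [postWidder]
    _ ≤ postWidder u n (n / t + b) := monotone_postWidder hu hba ha hCM hn n.zero_le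

end CompletelyMonotoneTransform

theorem relaxation_solution_monotone_general {μ u : ℝ → ℝ} {lam b : ℝ}
    (hμ : IntervalIntegrable μ volume 0 1) (hμ₀ : ∀ α ∈ Icc (0 : ℝ) 1, 0 ≤ μ α)
    (hpos : 0 < ∫ α in (0 : ℝ)..1, μ α) (hlam : 0 ≤ lam) (hcont : ContinuousOn u (Ici 0))
    (hu : IntegrableOn (fun t ↦ Real.exp (-b * t) * u t) (Ioi 0))
    (hlap : ∀ᶠ p in atTop,
      ∫ t in Ioi (0 : ℝ), Real.exp (-p * t) * u t = Kreal μ p / (p * Kreal μ p - lam)) :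
    MonotoneOn u (Ici 0) ∧ ∀ t, 0 ≤ t → 1 ≤ u t := by
  obtain ⟨a, hab, ha⟩ : ∃ a ≥ max 0 b, ∀ p ∈ Ioi a, lam < p * Kreal μ p ∧
      p * laplaceMoment u 0 p = p * Kreal μ p / (p * Kreal μ p - lam) := by
    obtain ⟨a, ha⟩ := eventually_atTop.1
      (((tendsto_mul_Kreal_atTop hμ hμ₀ hpos).eventually_gt_atTop lam).and hlap)
    refine ⟨max a (max 0 b), le_max_right _ _, fun p hp ↦ ?_⟩
    obtain ⟨hK, hp⟩ := ha p ((le_max_left _ _).trans (le_of_lt hp))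
    exact ⟨hK, by simp only [laplaceMoment, pow_zero, one_mul, smul_eq_mul, hp, mul_div_assoc]⟩
  obtain ⟨ha₀, hba⟩ := max_le_iff.1 hab
  have hCM : CompletelyMonotoneOn (fun p ↦ p * laplaceMoment u 0 p) (Ioi a) :=
    (completelyMonotoneOn_mul_Kreal_div hμ hμ₀ hlam ha₀ fun p hp ↦ (ha p hp).1).congr
      fun p hp ↦ (ha p hp).2
  have hone (p : ℝ) (hp : p ∈ Ioi a) : 1 ≤ p * laplaceMoment u 0 p := by
    rw [(ha p hp).2, one_le_div (sub_pos.2 (ha p hp).1)]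
    exact sub_le_self _ hlam
  have hmono := monotoneOn_of_completelyMonotoneOn_mul_laplaceMoment hu hba ha₀
    (hcont.mono Ioi_subset_Ici_self) hCM
  have hone_le (t : ℝ) (ht : t ∈ Ioi 0) : 1 ≤ u t :=
    le_of_completelyMonotoneOn_mul_laplaceMoment hu hba ha₀ hCM hone ht
      (hcont.continuousAt (Ici_mem_nhds ht))
  refine ⟨?_, fun t ht ↦ ?_⟩
  · rw [← Ioi_insert]
    exact hmono.insert_of_continuousWithinAt (mem_closure_iff_clusterPt.1 (by simp))
      ((hcont 0 self_mem_Ici).mono Ioi_subset_Ici_self)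
  · rw [← closure_Ioi] at hcont
    exact le_on_closure hone_le continuousOn_const hcont (by simpa using ht)

theorem relaxation_solution_monotone (μ : ℝ → ℝ)
    (hc : ContinuousOn μ (Set.Icc 0 1))
    (hnn : ∀ α ∈ Set.Icc (0:ℝ) 1, 0 ≤ μ α)
    (hne : ∃ α ∈ Set.Icc (0:ℝ) 1, μ α ≠ 0)
    (hC2 : ContDiffOn ℝ 2 μ (Set.Icc 0 1))
    (h1 : μ 1 ≠ 0)
    (lam : ℝ) (hlam : 0 < lam)
    (u : ℝ → ℝ) (hu : ContinuousOn u (Set.Ici 0))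
    (M c : ℝ) (hM : 0 < M) (hcpos : 0 < c)
    (hbound : ∀ t : ℝ, 0 ≤ t → |u t| ≤ M * Real.exp (c * t))
    (hlap : ∃ p₀ : ℝ, ∀ p : ℝ, p₀ ≤ p →
      ∫ t in Set.Ioi (0:ℝ), Real.exp (-p * t) * u t
        = Kreal μ p / (p * Kreal μ p - lam)) :
    MonotoneOn u (Set.Ici 0) ∧ ∀ t : ℝ, 0 ≤ t → 1 ≤ u t := by
  obtain ⟨α, hα, hμα⟩ := hne
  have hpos : 0 < ∫ α in (0 : ℝ)..1, μ α :=
    intervalIntegral.integral_pos one_pos hc (fun α hα ↦ hnn α (Ioc_subset_Icc_self hα))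
      ⟨α, hα, (hnn α hα).lt_of_ne' hμα⟩
  exact relaxation_solution_monotone_general (hc.intervalIntegrable_of_Icc zero_le_one) hnn hpos
    hlam.le hu (integrableOn_exp_neg_mul_smul_of_norm_le
      ((hu.mono Ioi_subset_Ici_self).aestronglyMeasurable measurableSet_Ioi)
      (fun t ht ↦ hbound t (le_of_lt ht)) (lt_add_one c))
    (eventually_atTop.2 hlap)
end

section
/- Let μ be a continuous non-negative function on [0,1], not identically zero, twice continuously differentiable, with μ(1) ≠ 0 and μ(0) ≠ 0, and let λ < 0. Suppose u : (0,∞) → ℝ is continuous and locally integrable, and its Laplace transform converges absolutely and satisfies ∫₀^∞ e^{−pt} u(t) dt = K(p)/(p K(p) − λ) for all real p > 0. Then u(t) ∼ C (log t)^{−1} as t → ∞ with C = μ(0)/(−λ); that is, lim_{t→∞} (log t) · u(t) = μ(0)/(−λ). -/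
open MeasureTheory Filter Set

/-!
With `c = -λ` and `g(p) = p K(p) = ∫₀¹ p^α μ(α) dα`, the hypothesis reads
`p ∫₀^∞ e^{-pt} u(t) dt = 1 - c / (g(p) + c)`. Each `p ↦ p^α` with `0 < α < 1` is a Bernstein
function, hence so is `g`, and `k ↦ c / (g(k) + c)` is a completely monotone sequence. In the
variable `x = e^{-t}` this says that the means of `u(-log x)` against the Beta densities
`xᵏ (1 - x)ᵐ` are nonnegative and increase with `k` when `k + m` is fixed; since Beta densities
concentrate at their modes, `u` is nonnegative and nonincreasing. As `p → 0+` the kernels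
`α ↦ -log p · p^α` form an approximate identity at `α = 0`, so `g(p) ~ μ(0) / (-log p)` and
`p ∫₀^∞ e^{-pt} u(t) dt ~ μ(0) / (-c log p)`. Karamata's Tauberian argument, which uses the
monotonicity of `u`, turns this into the asymptotics of `u`.
-/

open Polynomial (X derivative derivative_pow derivative_sub eval_sub)
open scoped Topology Polynomial

/-! ### Completely monotone sequences -/

/-- Complete monotonicity to order `n`: the alternating differences `(-Δ)ʲ f` with `j ≤ n` are
nonnegative. Recursion on the order makes products and reciprocals amenable to induction. -/
def CompletelyMonotoneUpTo {R : Type*} [Ring R] [PartialOrder R] : ℕ → (ℕ → R) → Prop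
  | 0, f => ∀ k, 0 ≤ f k
  | n + 1, f => (∀ k, 0 ≤ f k) ∧ CompletelyMonotoneUpTo n fun k => f k - f (k + 1)

/-- A completely monotone sequence in the sense of Hausdorff: all alternating differences
`(-Δ)ⁿ f` are nonnegative. -/
def CompletelyMonotone {R : Type*} [Ring R] [PartialOrder R] (f : ℕ → R) : Prop :=
  ∀ n, CompletelyMonotoneUpTo n f

namespace CompletelyMonotoneUpTo

section OrderedRing

variable {R : Type*} [Ring R] [PartialOrder R] {n : ℕ} {f g : ℕ → R}

theorem nonneg (h : CompletelyMonotoneUpTo n f) (k : ℕ) : 0 ≤ f k := by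
  cases n with
  | zero => exact h k
  | succ n => exact h.1 k

theorem of_succ (h : CompletelyMonotoneUpTo (n + 1) f) : CompletelyMonotoneUpTo n f := by
  induction n generalizing f with
  | zero => exact h.1
  | succ n ih => exact ⟨h.1, ih h.2⟩

theorem comp_add_one (h : CompletelyMonotoneUpTo n f) :
    CompletelyMonotoneUpTo n fun k => f (k + 1) := by
  induction n generalizing f with
  | zero => exact fun k => h (k + 1)
  | succ n ih => exact ⟨fun k => h.1 (k + 1), ih h.2⟩

variable [IsOrderedRing R]

theorem add (hf : CompletelyMonotoneUpTo n f) (hg : CompletelyMonotoneUpTo n g) :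
    CompletelyMonotoneUpTo n fun k => f k + g k := by
  induction n generalizing f g with
  | zero => exact fun k => add_nonneg (hf k) (hg k)
  | succ n ih =>
    refine ⟨fun k => add_nonneg (hf.1 k) (hg.1 k), ?_⟩
    convert ih hf.2 hg.2 using 2
    exact add_sub_add_comm _ _ _ _

-- The differences obey the Leibniz rule `f g - f' g' = (f - f') g + f' (g - g')`.
theorem mul (hf : CompletelyMonotoneUpTo n f) (hg : CompletelyMonotoneUpTo n g) :
    CompletelyMonotoneUpTo n fun k => f k * g k := by
  induction n generalizing f g with
  | zero => exact fun k => mul_nonneg (hf k) (hg k)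
  | succ n ih =>
    refine ⟨fun k => mul_nonneg (hf.1 k) (hg.1 k), ?_⟩
    convert (ih hf.2 hg.of_succ).add (ih hf.of_succ.comp_add_one hg.2) using 2
    noncomm_ring

end OrderedRing

theorem integral {Ω : Type*} [MeasurableSpace Ω] {ν : Measure Ω} {n : ℕ} {F : ℕ → Ω → ℝ}
    (hF : ∀ k, Integrable (F k) ν) (h : ∀ᵐ ω ∂ν, CompletelyMonotoneUpTo n fun k => F k ω) :
    CompletelyMonotoneUpTo n fun k => ∫ ω, F k ω ∂ν := by
  have nonneg_integral (k : ℕ) : 0 ≤ ∫ ω, F k ω ∂ν :=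
    integral_nonneg_of_ae (h.mono fun ω hω => hω.nonneg k)
  induction n generalizing F with
  | zero => exact nonneg_integral
  | succ n ih =>
    refine ⟨nonneg_integral, ?_⟩
    have hdiff : ∀ᵐ ω ∂ν, CompletelyMonotoneUpTo n fun k => F k ω - F (k + 1) ω :=
      h.mono fun ω hω => hω.2
    convert ih (F := fun k ω => F k ω - F (k + 1) ω) (fun k => (hF k).sub (hF (k + 1))) hdiff
      (fun k => integral_nonneg_of_ae (hdiff.mono fun ω hω => hω.nonneg k)) using 2 with k
    exact (integral_sub (hF k) (hF (k + 1))).symm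

end CompletelyMonotoneUpTo

namespace CompletelyMonotone

section OrderedRing

variable {R : Type*} [Ring R] [PartialOrder R] {f g : ℕ → R}

theorem nonneg (h : CompletelyMonotone f) (k : ℕ) : 0 ≤ f k := h 0 k

theorem sub_succ (h : CompletelyMonotone f) : CompletelyMonotone fun k => f k - f (k + 1) :=
  fun n => (h (n + 1)).2

theorem const {c : R} (hc : 0 ≤ c) : CompletelyMonotone fun _ => c := by
  intro n
  induction n generalizing c with
  | zero => exact fun _ => hc
  | succ n ih => exact ⟨fun _ => hc, by simpa only [sub_self] using ih le_rfl⟩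

theorem mul [IsOrderedRing R] (hf : CompletelyMonotone f) (hg : CompletelyMonotone g) :
    CompletelyMonotone fun k => f k * g k :=
  fun n => (hf n).mul (hg n)

end OrderedRing

-- The differences of `1/g` satisfy `1/g - 1/g' = (g' - g) · (1/g) · (1/g')`, so their order-`n`
-- monotonicity follows from that of `1/g`.
theorem inv {R : Type*} [Field R] [LinearOrder R] [IsStrictOrderedRing R] {g : ℕ → R}
    (hg : ∀ k, 0 < g k) (hdiff : CompletelyMonotone fun k => g (k + 1) - g k) :
    CompletelyMonotone fun k => (g k)⁻¹ := by
  have hinv (k : ℕ) : 0 ≤ (g k)⁻¹ := (inv_pos.2 (hg k)).le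
  intro n
  induction n with
  | zero => exact hinv
  | succ n ih =>
    refine ⟨hinv, ?_⟩
    convert ((hdiff n).mul ih).mul ih.comp_add_one using 1
    funext k
    have := (hg k).ne'
    have := (hg (k + 1)).ne'
    field_simp

theorem integral {Ω : Type*} [MeasurableSpace Ω] {ν : Measure Ω} {F : ℕ → Ω → ℝ}
    (hF : ∀ k, Integrable (F k) ν) (h : ∀ᵐ ω ∂ν, CompletelyMonotone fun k => F k ω) :
    CompletelyMonotone fun k => ∫ ω, F k ω ∂ν :=
  fun n => .integral hF (h.mono fun _ hω => hω n)

theorem rpow_sub {a : ℝ} (ha : a ∈ Ioo (0 : ℝ) 1) :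
    CompletelyMonotone fun k : ℕ => ((k + 1 : ℕ) : ℝ) ^ a - (k : ℝ) ^ a := by
  obtain ⟨ν, hν⟩ := Real.exists_measure_rpow_eq_integral_rpowIntegrand₀₁ ha
  have hint (k : ℕ) : IntegrableOn (fun t => a.rpowIntegrand₀₁ t k) (Ioi 0) ν :=
    (hν k (mem_Ici.2 k.cast_nonneg)).1
  have hrpow (k : ℕ) : (k : ℝ) ^ a = ∫ t in Ioi 0, a.rpowIntegrand₀₁ t k ∂ν :=
    (hν k (mem_Ici.2 k.cast_nonneg)).2
  have hintegrand : ∀ᵐ t ∂ν.restrict (Ioi 0), CompletelyMonotone fun k : ℕ =>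
      a.rpowIntegrand₀₁ t (k + 1 : ℕ) - a.rpowIntegrand₀₁ t k := by
    filter_upwards [ae_restrict_mem measurableSet_Ioi] with t (ht : 0 < t)
    have hresolvent : CompletelyMonotone fun k : ℕ => (t + k)⁻¹ := by
      refine inv (fun k => by positivity) ?_
      simpa only [Nat.cast_add_one, ← add_assoc, add_sub_cancel_left] using
        const (zero_le_one' ℝ)
    convert (const (Real.rpow_nonneg ht.le a)).mul hresolvent.sub_succ using 2
    simp only [Real.rpowIntegrand₀₁]
    ring
  convert integral (fun k => (hint (k + 1)).sub (hint k)) hintegrand using 2 with k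
  rw [hrpow, hrpow]
  exact (integral_sub (hint (k + 1)) (hint k)).symm

end CompletelyMonotone

/-! ### The symbol of the distributed-order derivative -/

/-- The symbol `p ↦ ∫₀¹ p^α μ(α) dα = p K(p)` of the distributed-order derivative with weight `μ`.
Unlike `p K(p)`, it is also meaningful at `p = 0`, where it vanishes. -/
noncomputable def orderSymbol (μ : ℝ → ℝ) (p : ℝ) : ℝ := ∫ α in Ioc (0 : ℝ) 1, p ^ α * μ α

section OrderSymbol

variable {μ : ℝ → ℝ} {p : ℝ}

theorem mul_Kreal (hp : 0 < p) : p * Kreal μ p = orderSymbol μ p := by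
  rw [Kreal, intervalIntegral.integral_of_le zero_le_one, orderSymbol, ← integral_const_mul]
  congr 1 with α
  rw [Real.rpow_sub_one hp.ne']
  field_simp

theorem orderSymbol_zero : orderSymbol μ 0 = 0 :=
  setIntegral_eq_zero_of_forall_eq_zero fun α hα => by rw [Real.zero_rpow hα.1.ne', zero_mul]

theorem orderSymbol_nonneg (hμ : ∀ α ∈ Ioc (0 : ℝ) 1, 0 ≤ μ α) (hp : 0 ≤ p) :
    0 ≤ orderSymbol μ p :=
  setIntegral_nonneg measurableSet_Ioc fun α hα => mul_nonneg (Real.rpow_nonneg hp α) (hμ α hα)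

theorem integrableOn_rpow_mul (hμ : IntegrableOn μ (Ioc 0 1)) (hp : 0 ≤ p) :
    IntegrableOn (fun α => p ^ α * μ α) (Ioc 0 1) := by
  refine hμ.bdd_mul (c := max 1 p) (by fun_prop) ?_
  filter_upwards [ae_restrict_mem measurableSet_Ioc] with α hα
  rw [Real.norm_of_nonneg (Real.rpow_nonneg hp α)]
  calc p ^ α ≤ max 1 p ^ α := Real.rpow_le_rpow hp (le_max_right 1 p) hα.1.le
    _ ≤ max 1 p ^ (1 : ℝ) := Real.rpow_le_rpow_of_exponent_le (le_max_left 1 p) hα.2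
    _ = max 1 p := Real.rpow_one _

theorem completelyMonotone_orderSymbol_sub (hμ : IntegrableOn μ (Ioc 0 1))
    (hμ0 : ∀ α ∈ Ioc (0 : ℝ) 1, 0 ≤ μ α) :
    CompletelyMonotone fun k : ℕ => orderSymbol μ (k + 1 : ℕ) - orderSymbol μ k := by
  have hint (k : ℕ) := integrableOn_rpow_mul hμ k.cast_nonneg
  have hintegrand : ∀ᵐ α ∂volume.restrict (Ioc (0 : ℝ) 1), CompletelyMonotone fun k : ℕ =>
      ((k + 1 : ℕ) : ℝ) ^ α * μ α - (k : ℝ) ^ α * μ α := by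
    filter_upwards [ae_restrict_mem measurableSet_Ioc, ae_restrict_of_ae (volume.ae_ne 1)]
      with α hα hα1
    convert (CompletelyMonotone.rpow_sub ⟨hα.1, hα.2.lt_of_ne hα1⟩).mul
      (.const (hμ0 α hα)) using 2
    exact (sub_mul _ _ _).symm
  convert CompletelyMonotone.integral (fun k => (hint (k + 1)).sub (hint k)) hintegrand using 2
    with k
  exact (integral_sub (hint (k + 1)) (hint k)).symm

theorem completelyMonotone_div_orderSymbol_add (hμ : IntegrableOn μ (Ioc 0 1))
    (hμ0 : ∀ α ∈ Ioc (0 : ℝ) 1, 0 ≤ μ α) {c : ℝ} (hc : 0 < c) :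
    CompletelyMonotone fun k : ℕ => c / (orderSymbol μ k + c) := by
  have hpos (k : ℕ) : 0 < orderSymbol μ k + c :=
    add_pos_of_nonneg_of_pos (orderSymbol_nonneg hμ0 k.cast_nonneg) hc
  have hinv : CompletelyMonotone fun k : ℕ => (orderSymbol μ k + c)⁻¹ := by
    refine .inv hpos ?_
    simpa only [add_sub_add_right_eq_sub] using completelyMonotone_orderSymbol_sub hμ hμ0
  simpa only [div_eq_mul_inv] using (CompletelyMonotone.const hc.le).mul hinv

theorem integral_neg_log_mul_rpow (hp : 0 < p) :
    ∫ α in Ioc (0 : ℝ) 1, -Real.log p * p ^ α = 1 - p := by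
  rw [← intervalIntegral.integral_of_le zero_le_one,
    intervalIntegral.integral_eq_sub_of_hasDerivAt (f := fun α => -p ^ α)
      (fun α _ => (Real.hasStrictDerivAt_const_rpow hp α).hasDerivAt.fun_neg.congr_deriv (by ring))
      (((Real.continuous_const_rpow hp.ne').const_mul _).intervalIntegrable _ _),
    Real.rpow_one, Real.rpow_zero]
  ring

theorem tendstoUniformlyOn_neg_log_mul_rpow {δ : ℝ} (hδ : 0 < δ) :
    TendstoUniformlyOn (fun p α : ℝ => -Real.log p * p ^ α) 0 (𝓝[>] 0) (Ici δ) := by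
  have hbound : Tendsto (fun p : ℝ => -Real.log p * p ^ δ) (𝓝[>] 0) (𝓝 0) := by
    simpa using (tendsto_log_mul_rpow_nhdsGT_zero hδ).neg
  rw [Metric.tendstoUniformlyOn_iff]
  intro ε hε
  filter_upwards [Ioo_mem_nhdsGT zero_lt_one, hbound.eventually_lt_const hε] with p hp hpε α hα
  have hlog : 0 ≤ -Real.log p := neg_nonneg.2 (Real.log_neg hp.1 hp.2).le
  rw [Pi.zero_apply, dist_zero_left,
    Real.norm_of_nonneg (mul_nonneg hlog (Real.rpow_nonneg hp.1.le α))]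
  exact (mul_le_mul_of_nonneg_left
    (Real.rpow_le_rpow_of_exponent_ge hp.1 hp.2.le hα) hlog).trans_lt hpε

-- The kernels `α ↦ -log p * p ^ α` are an approximate identity at `0` on `(0, 1]` as `p → 0`.
theorem tendsto_neg_log_mul_orderSymbol {m : ℝ} (hμ : IntegrableOn μ (Ioc 0 1))
    (hm : Tendsto μ (𝓝[>] 0) (𝓝 m)) :
    Tendsto (fun p => -Real.log p * orderSymbol μ p) (𝓝[>] 0) (𝓝 m) := by
  have hnonneg : ∀ᶠ p : ℝ in 𝓝[>] 0, ∀ α ∈ Ioc (0 : ℝ) 1, 0 ≤ -Real.log p * p ^ α := by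
    filter_upwards [Ioo_mem_nhdsGT zero_lt_one] with p hp α _
    exact mul_nonneg (neg_nonneg.2 (Real.log_neg hp.1 hp.2).le) (Real.rpow_nonneg hp.1.le α)
  have hmass :
      Tendsto (fun p : ℝ => ∫ α in Ioc (0 : ℝ) 1, -Real.log p * p ^ α) (𝓝[>] 0) (𝓝 1) := by
    have : Tendsto (fun p : ℝ => 1 - p) (𝓝[>] 0) (𝓝 1) :=
      (Continuous.tendsto' (by fun_prop) 0 1 (sub_zero 1)).mono_left nhdsWithin_le_nhds
    exact this.congr' (eventually_mem_nhdsWithin.mono fun p hp =>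
      (integral_neg_log_mul_rpow hp).symm)
  have hconc (U : Set ℝ) (hU : IsOpen U) (h0 : (0 : ℝ) ∈ U) :
      TendstoUniformlyOn (fun p α : ℝ => -Real.log p * p ^ α) 0 (𝓝[>] 0) (Ioc 0 1 \ U) := by
    obtain ⟨δ, hδ, hball⟩ := Metric.isOpen_iff.1 hU 0 h0
    refine (tendstoUniformlyOn_neg_log_mul_rpow hδ).mono fun α hα => ?_
    by_contra h
    exact hα.2 (hball (by simpa [abs_of_pos hα.1.1] using h))
  have := tendsto_setIntegral_peak_smul_of_integrableOn_of_tendsto measurableSet_Ioc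
    measurableSet_Ioc subset_rfl self_mem_nhdsWithin (by simp)
    hnonneg hconc hmass (.of_forall fun p => by fun_prop) hμ
    (hm.mono_left (nhdsWithin_mono 0 Ioc_subset_Ioi_self))
  simpa only [orderSymbol, smul_eq_mul, mul_assoc, integral_const_mul] using this

theorem tendsto_orderSymbol_zero {m : ℝ} (hμ : IntegrableOn μ (Ioc 0 1))
    (hm : Tendsto μ (𝓝[>] 0) (𝓝 m)) : Tendsto (orderSymbol μ) (𝓝[>] 0) (𝓝 0) := by
  have hlog : Tendsto (fun p : ℝ => -Real.log p) (𝓝[>] 0) atTop :=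
    tendsto_neg_atBot_atTop.comp Real.tendsto_log_nhdsGT_zero
  refine ((tendsto_neg_log_mul_orderSymbol hμ hm).div_atTop hlog).congr' ?_
  filter_upwards [hlog.eventually_gt_atTop 0] with p hp
  exact mul_div_cancel_left₀ _ hp.ne'

theorem tendsto_log_mul_orderSymbol_div {m c q : ℝ} (hμ : IntegrableOn μ (Ioc 0 1))
    (hm : Tendsto μ (𝓝[>] 0) (𝓝 m)) (hc : c ≠ 0) (hq : 0 < q) :
    Tendsto (fun T => Real.log T * (orderSymbol μ (q / T) / (orderSymbol μ (q / T) + c))) atTop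
      (𝓝 (m / c)) := by
  have hdiv : Tendsto (fun T : ℝ => q / T) atTop (𝓝[>] 0) :=
    tendsto_nhdsWithin_iff.2 ⟨tendsto_const_nhds.div_atTop tendsto_id,
      (eventually_gt_atTop 0).mono fun T hT => div_pos hq hT⟩
  have hlog := (tendsto_neg_log_mul_orderSymbol hμ hm).comp hdiv
  have hzero := (tendsto_orderSymbol_zero hμ hm).comp hdiv
  have hnum := hlog.add (hzero.const_mul (Real.log q))
  have hden := hzero.add_const c
  rw [mul_zero, add_zero] at hnum
  rw [zero_add] at hden
  refine (hnum.div hden hc).congr' ?_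
  filter_upwards [eventually_gt_atTop 0] with T hT
  simp only [Function.comp, Pi.div_apply]
  rw [Real.log_div hq.ne' hT.ne']
  ring

end OrderSymbol

/-! ### Hausdorff moments of monotone functions -/

/-- The moment `∫₀¹ xᵏ (1 - x)ᵐ v(x) dx` of `v` against an unnormalised Beta density. -/
noncomputable def betaMoment (v : ℝ → ℝ) (k m : ℕ) : ℝ :=
  ∫ x in Icc (0 : ℝ) 1, x ^ k * (1 - x) ^ m * v x

/-- The mean of `v` under the Beta distribution with density proportional to `xᵏ (1 - x)ᵐ`. -/
noncomputable def betaMean (v : ℝ → ℝ) (k m : ℕ) : ℝ :=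
  betaMoment v k m / betaMoment 1 k m

section BetaMean

variable {v : ℝ → ℝ} {ψ : ℕ → ℝ}

theorem integral_derivative_eval_mul (hv : IntegrableOn v (Icc 0 1)) (k m : ℕ) :
    ∫ x in Icc (0 : ℝ) 1, (X ^ (k + 1) * (1 - X) ^ (m + 1) : ℝ[X]).derivative.eval x * v x =
      (k + 1) * betaMoment v k (m + 1) - (m + 1) * betaMoment v (k + 1) m := by
  have hint (k m : ℕ) : IntegrableOn (fun x => x ^ k * (1 - x) ^ m * v x) (Icc 0 1) :=
    hv.continuousOn_mul (by fun_prop) isCompact_Icc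
  rw [betaMoment, betaMoment, ← integral_const_mul, ← integral_const_mul,
    ← integral_sub ((hint k (m + 1)).const_mul _) ((hint (k + 1) m).const_mul _)]
  congr 1 with x
  simp [derivative_pow]
  ring

theorem betaMoment_one_pos (k m : ℕ) : 0 < betaMoment 1 k m := by
  rw [betaMoment, integral_Icc_eq_integral_Ioc, ← intervalIntegral.integral_of_le zero_le_one]
  refine intervalIntegral.intervalIntegral_pos_of_pos_on
    (Continuous.intervalIntegrable (by simp only [Pi.one_apply]; fun_prop) _ _)
    (fun x hx => ?_) zero_lt_one
  have : 0 < 1 - x := sub_pos.2 hx.2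
  have := hx.1
  simp only [Pi.one_apply]
  positivity

theorem betaMoment_one_recurrence (k m : ℕ) :
    (k + 1) * betaMoment 1 k (m + 1) = (m + 1) * betaMoment 1 (k + 1) m := by
  have hftc :
      ∫ x in Icc (0 : ℝ) 1, (X ^ (k + 1) * (1 - X) ^ (m + 1) : ℝ[X]).derivative.eval x = 0 := by
    rw [integral_Icc_eq_integral_Ioc, ← intervalIntegral.integral_of_le zero_le_one,
      intervalIntegral.integral_eq_sub_of_hasDerivAt (fun x _ => Polynomial.hasDerivAt _ x)
        ((Polynomial.continuous _).intervalIntegrable _ _)]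
    simp
  have := integral_derivative_eval_mul (v := 1) (by simp [Pi.one_def]) k m
  simp only [Pi.one_apply, mul_one, hftc] at this
  exact sub_eq_zero.1 this.symm

-- Integrating `P' v` for `P = xᵏ` gives `1 - ψ k`; the constant drops out after one difference, and
-- multiplication of `P` by `1 - x` takes a difference in `k`.
theorem completelyMonotone_neg_integral_derivative (hv : IntegrableOn v (Icc 0 1))
    (hψ : CompletelyMonotone ψ)
    (hmom : ∀ k : ℕ, k * ∫ x in Icc (0 : ℝ) 1, x ^ (k - 1) * v x = 1 - ψ k) (m : ℕ) :
    CompletelyMonotone fun k =>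
      -∫ x in Icc (0 : ℝ) 1, (X ^ k * (1 - X) ^ (m + 1) : ℝ[X]).derivative.eval x * v x := by
  have hint (P : ℝ[X]) : IntegrableOn (fun x => P.eval x * v x) (Icc 0 1) :=
    hv.continuousOn_mul P.continuousOn isCompact_Icc
  have hdiff (k m : ℕ) :
      ∫ x in Icc (0 : ℝ) 1, (X ^ k * (1 - X) ^ (m + 1) : ℝ[X]).derivative.eval x * v x =
        (∫ x in Icc (0 : ℝ) 1, (X ^ k * (1 - X) ^ m : ℝ[X]).derivative.eval x * v x) -
          ∫ x in Icc (0 : ℝ) 1, (X ^ (k + 1) * (1 - X) ^ m : ℝ[X]).derivative.eval x * v x := by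
    rw [← integral_sub (hint _) (hint _)]
    congr 1 with x
    rw [← sub_mul, ← eval_sub, ← derivative_sub]
    congr 3
    ring
  induction m with
  | zero =>
    have hpow (k : ℕ) :
        ∫ x in Icc (0 : ℝ) 1, (X ^ k * (1 - X) ^ 0 : ℝ[X]).derivative.eval x * v x = 1 - ψ k := by
      rw [← hmom k, ← integral_const_mul]
      simp [derivative_pow, mul_assoc]
    convert hψ.sub_succ using 2
    rw [hdiff, hpow, hpow]
    ring
  | succ m ih =>
    convert ih.sub_succ using 2
    rw [hdiff]
    ring

theorem betaMoment_zero_nonneg (hv : IntegrableOn v (Icc 0 1)) (hψ : CompletelyMonotone ψ)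
    (hmom : ∀ k : ℕ, k * ∫ x in Icc (0 : ℝ) 1, x ^ (k - 1) * v x = 1 - ψ k) (m : ℕ) :
    0 ≤ betaMoment v 0 m := by
  have hderiv :
      -∫ x in Icc (0 : ℝ) 1, (X ^ 0 * (1 - X) ^ (m + 1) : ℝ[X]).derivative.eval x * v x =
        (m + 1) * betaMoment v 0 m := by
    rw [betaMoment, ← integral_const_mul, ← integral_neg]
    congr 1 with x
    simp [derivative_pow]
    ring
  have := (completelyMonotone_neg_integral_derivative hv hψ hmom m).nonneg 0
  rw [hderiv] at this
  exact nonneg_of_mul_nonneg_right this (by positivity)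

theorem betaMean_le_betaMean_succ (hv : IntegrableOn v (Icc 0 1)) (hψ : CompletelyMonotone ψ)
    (hmom : ∀ k : ℕ, k * ∫ x in Icc (0 : ℝ) 1, x ^ (k - 1) * v x = 1 - ψ k) (k m : ℕ) :
    betaMean v k (m + 1) ≤ betaMean v (k + 1) m := by
  have hmoment : (k + 1) * betaMoment v k (m + 1) ≤ (m + 1) * betaMoment v (k + 1) m := by
    have := (completelyMonotone_neg_integral_derivative hv hψ hmom m).nonneg (k + 1)
    rwa [integral_derivative_eval_mul hv, neg_sub, sub_nonneg] at this
  have hk : (k + 1 : ℝ) ≠ 0 := by positivity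
  have hm : (m + 1 : ℝ) ≠ 0 := by positivity
  have hpos := betaMoment_one_pos (k + 1) m
  calc betaMean v k (m + 1)
      = ((k + 1) * betaMoment v k (m + 1)) / ((k + 1) * betaMoment 1 k (m + 1)) :=
        (mul_div_mul_left _ _ hk).symm
    _ = ((k + 1) * betaMoment v k (m + 1)) / ((m + 1) * betaMoment 1 (k + 1) m) := by
        rw [betaMoment_one_recurrence]
    _ ≤ ((m + 1) * betaMoment v (k + 1) m) / ((m + 1) * betaMoment 1 (k + 1) m) := by gcongr
    _ = betaMean v (k + 1) m := mul_div_mul_left _ _ hm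

theorem betaMean_le_betaMean_add (hv : IntegrableOn v (Icc 0 1)) (hψ : CompletelyMonotone ψ)
    (hmom : ∀ k : ℕ, k * ∫ x in Icc (0 : ℝ) 1, x ^ (k - 1) * v x = 1 - ψ k) (k m i : ℕ) :
    betaMean v k (m + i) ≤ betaMean v (k + i) m := by
  induction i generalizing k with
  | zero => exact le_rfl
  | succ i ih =>
    calc betaMean v k (m + (i + 1))
        ≤ betaMean v (k + 1) (m + i) := betaMean_le_betaMean_succ hv hψ hmom k (m + i)
      _ ≤ betaMean v (k + 1 + i) m := ih (k + 1)
      _ = betaMean v (k + (i + 1)) m := by rw [add_right_comm, add_assoc]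

end BetaMean

theorem pow_mul_pow_lt_one {a b : ℕ} (ha : a ≠ 0) (hb : b ≠ 0) {s t : ℝ} (hs : 0 ≤ s) (ht : 0 ≤ t)
    (hst : a * s + b * t = a + b) (hs1 : s ≠ 1) : s ^ a * t ^ b < 1 := by
  have ht1 : t ≠ 1 := by
    rintro rfl
    exact hs1 (mul_left_cancel₀ (Nat.cast_ne_zero.2 ha) (by linarith))
  have lt_exp {r : ℝ} (hr : r ≠ 1) : r < Real.exp (r - 1) := by
    linarith [Real.add_one_lt_exp (sub_ne_zero.2 hr)]
  calc s ^ a * t ^ b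
      < Real.exp (s - 1) ^ a * Real.exp (t - 1) ^ b := by
        refine mul_lt_mul'' (pow_lt_pow_left₀ (lt_exp hs1) hs ha)
          (pow_lt_pow_left₀ (lt_exp ht1) ht hb) (by positivity) (by positivity)
    _ = Real.exp (a * s + b * t - (a + b)) := by
        rw [← Real.exp_nat_mul, ← Real.exp_nat_mul, ← Real.exp_add]
        ring_nf
    _ = 1 := by rw [hst, sub_self, Real.exp_zero]

theorem pow_mul_one_sub_pow_lt {a b : ℕ} (ha : 0 < a) (hb : 0 < b) {y : ℝ}
    (hy : y ∈ Icc (0 : ℝ) 1) (hne : y ≠ a / (a + b)) :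
    y ^ a * (1 - y) ^ b < (a / (a + b) : ℝ) ^ a * (1 - a / (a + b)) ^ b := by
  have hx : (1 - a / (a + b) : ℝ) = b / (a + b) := by field_simp; ring
  have hratio := pow_mul_pow_lt_one ha.ne' hb.ne' (s := y / (a / (a + b)))
    (t := (1 - y) / (b / (a + b))) (div_nonneg hy.1 (by positivity))
    (div_nonneg (sub_nonneg.2 hy.2) (by positivity)) (by field_simp; ring)
    (fun h => hne ((div_eq_one_iff_eq (by positivity)).1 h))
  rwa [div_pow y, div_pow (1 - y), div_mul_div_comm, div_lt_one (by positivity), ← hx] at hratio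

theorem div_add_mem_Ioo {a b : ℕ} (ha : 0 < a) (hb : 0 < b) : (a / (a + b) : ℝ) ∈ Ioo (0 : ℝ) 1 :=
  ⟨by positivity, (div_lt_one (by positivity)).2 (by simpa using hb)⟩

-- The Beta densities `xᵃⁿ (1 - x)ᵇⁿ` concentrate at their mode `a / (a + b)`.
theorem tendsto_betaMean {v : ℝ → ℝ} (hv : IntegrableOn v (Icc 0 1)) {a b : ℕ} (ha : 0 < a)
    (hb : 0 < b) (hcont : ContinuousAt v (a / (a + b))) :
    Tendsto (fun n => betaMean v (a * n) (b * n)) atTop (𝓝 (v (a / (a + b)))) := by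
  have hx : (a / (a + b) : ℝ) ∈ Ioo (0 : ℝ) 1 := div_add_mem_Ioo ha hb
  have := tendsto_setIntegral_pow_smul_of_unique_maximum_of_isCompact_of_integrableOn
    (c := fun x => x ^ a * (1 - x) ^ b) isCompact_Icc (by fun_prop)
    (fun y hy hne => pow_mul_one_sub_pow_lt ha hb hy hne)
    (fun x hx => mul_nonneg (pow_nonneg hx.1 _) (pow_nonneg (sub_nonneg.2 hx.2) _))
    (mul_pos (pow_pos hx.1 _) (pow_pos (sub_pos.2 hx.2) _))
    (by rw [interior_Icc]; exact subset_closure hx) hv hcont.continuousWithinAt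
  simpa only [betaMean, betaMoment, div_eq_inv_mul, smul_eq_mul, mul_pow, ← pow_mul, Pi.one_apply,
    mul_one] using this

theorem tendsto_floor_mul_div {x : ℝ} (hx : 0 ≤ x) :
    Tendsto (fun n : ℕ => (⌊x * n⌋₊ : ℝ) / n) atTop (𝓝 x) :=
  (tendsto_nat_floor_mul_div_atTop hx).comp tendsto_natCast_atTop_atTop

theorem monotoneOn_Ioo_of_rat {v : ℝ → ℝ} (hv : ContinuousOn v (Ioo 0 1))
    (hrat : ∀ a b n : ℕ, 0 < a → a < b → b < n → v (a / n) ≤ v (b / n)) :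
    MonotoneOn v (Ioo 0 1) := by
  intro x hx y hy hxy
  rcases hxy.eq_or_lt with rfl | hlt
  · exact le_rfl
  have hxn := tendsto_floor_mul_div hx.1.le
  have hyn := tendsto_floor_mul_div hy.1.le
  refine le_of_tendsto_of_tendsto ((hv.continuousAt (Ioo_mem_nhds hx.1 hx.2)).tendsto.comp hxn)
    ((hv.continuousAt (Ioo_mem_nhds hy.1 hy.2)).tendsto.comp hyn) ?_
  filter_upwards [hxn.eventually_const_lt hx.1, hxn.eventually_lt hyn hlt,
    hyn.eventually_lt_const hy.2, eventually_gt_atTop 0] with n hx0 hxy hy1 hn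
  have hn : (0 : ℝ) < n := Nat.cast_pos.2 hn
  rw [div_pos_iff_of_pos_right hn] at hx0
  rw [div_lt_div_iff_of_pos_right hn] at hxy
  rw [div_lt_one hn] at hy1
  exact hrat _ _ n (by exact_mod_cast hx0) (by exact_mod_cast hxy) (by exact_mod_cast hy1)

section Hausdorff

variable {v : ℝ → ℝ} {ψ : ℕ → ℝ}

theorem monotoneOn_of_moments (hv : IntegrableOn v (Icc 0 1)) (hcont : ContinuousOn v (Ioo 0 1))
    (hψ : CompletelyMonotone ψ)
    (hmom : ∀ k : ℕ, k * ∫ x in Icc (0 : ℝ) 1, x ^ (k - 1) * v x = 1 - ψ k) :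
    MonotoneOn v (Ioo 0 1) := by
  have tendsto_mean {a b : ℕ} (ha : 0 < a) (hb : 0 < b) :=
    tendsto_betaMean hv ha hb (hcont.continuousAt (isOpen_Ioo.mem_nhds (div_add_mem_Ioo ha hb)))
  refine monotoneOn_Ioo_of_rat hcont fun a b n ha hab hbn => ?_
  obtain ⟨i, rfl⟩ := Nat.exists_eq_add_of_le hab.le
  obtain ⟨m, rfl⟩ := Nat.exists_eq_add_of_le hbn.le
  have hm : 0 < m := by lia
  have hle (n : ℕ) : betaMean v (a * n) ((m + i) * n) ≤ betaMean v ((a + i) * n) (m * n) := by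
    simpa only [add_mul] using betaMean_le_betaMean_add hv hψ hmom (a * n) (m * n) (i * n)
  have hlim := le_of_tendsto_of_tendsto' (tendsto_mean ha (Nat.add_pos_left hm i))
    (tendsto_mean (Nat.add_pos_left ha i) hm) hle
  rwa [← Nat.cast_add, ← Nat.cast_add, add_comm m, ← add_assoc] at hlim

theorem nonneg_of_moments (hv : IntegrableOn v (Icc 0 1)) (hcont : ContinuousOn v (Ioo 0 1))
    (hψ : CompletelyMonotone ψ)
    (hmom : ∀ k : ℕ, k * ∫ x in Icc (0 : ℝ) 1, x ^ (k - 1) * v x = 1 - ψ k)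
    {x : ℝ} (hx : x ∈ Ioo (0 : ℝ) 1) : 0 ≤ v x := by
  obtain ⟨b, hb⟩ := exists_nat_one_div_lt hx.1
  have hmem := div_add_mem_Ioo zero_lt_one b.succ_pos
  have hmean (n : ℕ) : 0 ≤ betaMean v (1 * n) ((b + 1) * n) :=
    calc 0 ≤ betaMean v 0 ((b + 1) * n + 1 * n) :=
          div_nonneg (betaMoment_zero_nonneg hv hψ hmom _) (betaMoment_one_pos _ _).le
      _ ≤ betaMean v (0 + 1 * n) ((b + 1) * n) := betaMean_le_betaMean_add hv hψ hmom _ _ _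
      _ = betaMean v (1 * n) ((b + 1) * n) := by rw [zero_add]
  have hlim := tendsto_betaMean hv zero_lt_one b.succ_pos
    (hcont.continuousAt (isOpen_Ioo.mem_nhds hmem))
  refine (ge_of_tendsto' hlim hmean).trans
    (monotoneOn_of_moments hv hcont hψ hmom hmem hx (le_trans ?_ hb.le))
  rw [Nat.cast_one, Nat.cast_succ]
  exact one_div_le_one_div_of_le (by positivity) (by simp)

end Hausdorff

/-! ### Convergence of moments -/

theorem setIntegral_Icc_mono_on_Ioo {f g : ℝ → ℝ} {a b : ℝ} (hf : IntegrableOn f (Icc a b))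
    (hg : IntegrableOn g (Icc a b)) (h : ∀ x ∈ Ioo a b, f x ≤ g x) :
    ∫ x in Icc a b, f x ≤ ∫ x in Icc a b, g x := by
  rw [integral_Icc_eq_integral_Ioo, integral_Icc_eq_integral_Ioo]
  exact setIntegral_mono_on (hf.mono_set Ioo_subset_Icc_self) (hg.mono_set Ioo_subset_Icc_self)
    measurableSet_Ioo h

section Moments

variable {ι : Type*} {l : Filter ι} {V : ι → ℝ → ℝ} {W : ℝ → ℝ}

theorem tendsto_integral_polynomial_mul (hV : ∀ᶠ i in l, IntegrableOn (V i) (Icc 0 1))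
    (hW : IntegrableOn W (Icc 0 1))
    (hmom : ∀ k : ℕ, Tendsto (fun i => ∫ x in Icc (0 : ℝ) 1, x ^ k * V i x) l
      (𝓝 (∫ x in Icc (0 : ℝ) 1, x ^ k * W x))) (P : ℝ[X]) :
    Tendsto (fun i => ∫ x in Icc (0 : ℝ) 1, P.eval x * V i x) l
      (𝓝 (∫ x in Icc (0 : ℝ) 1, P.eval x * W x)) := by
  have hint {w : ℝ → ℝ} (hw : IntegrableOn w (Icc 0 1)) (Q : ℝ[X]) :
      IntegrableOn (fun x => Q.eval x * w x) (Icc 0 1) :=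
    hw.continuousOn_mul Q.continuousOn isCompact_Icc
  induction P using Polynomial.induction_on' with
  | add P Q hP hQ =>
    simp only [Polynomial.eval_add, add_mul]
    rw [integral_add (hint hW P) (hint hW Q)]
    refine (hP.add hQ).congr' (hV.mono fun i hi => ?_)
    exact (integral_add (hint hi P) (hint hi Q)).symm
  | monomial n a =>
    simpa only [Polynomial.eval_monomial, mul_assoc, integral_const_mul] using (hmom n).const_mul a

theorem exists_polynomial_le_of_lt_integral_mul (hW : IntegrableOn W (Icc 0 1))
    (hW0 : ∀ x ∈ Ioo (0 : ℝ) 1, 0 ≤ W x) {f : ℝ → ℝ} (hf : ContinuousOn f (Icc 0 1)) {a : ℝ}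
    (ha : a < ∫ x in Icc (0 : ℝ) 1, f x * W x) :
    ∃ P : ℝ[X], (∀ x ∈ Icc (0 : ℝ) 1, P.eval x ≤ f x) ∧
      a < ∫ x in Icc (0 : ℝ) 1, P.eval x * W x := by
  have hshift : Tendsto (fun δ => (∫ x in Icc (0 : ℝ) 1, f x * W x) -
      2 * δ * ∫ x in Icc (0 : ℝ) 1, W x) (𝓝[>] 0) (𝓝 (∫ x in Icc (0 : ℝ) 1, f x * W x)) :=
    (Continuous.tendsto' (by fun_prop) 0 _ (by simp)).mono_left nhdsWithin_le_nhds
  obtain ⟨δ, hδa, hδ⟩ := ((hshift.eventually_const_lt ha).and self_mem_nhdsWithin).exists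
  obtain ⟨P, hP⟩ := exists_polynomial_near_of_continuousOn 0 1 (fun x => f x - δ)
    (hf.sub continuousOn_const) δ hδ
  refine ⟨P, fun x hx => by linarith [(abs_lt.1 (hP x hx)).2], hδa.trans_le ?_⟩
  rw [← integral_const_mul,
    ← integral_sub (hW.continuousOn_mul hf isCompact_Icc) (hW.const_mul (2 * δ))]
  refine setIntegral_Icc_mono_on_Ioo
    ((hW.continuousOn_mul hf isCompact_Icc).sub (hW.const_mul (2 * δ)))
    (hW.continuousOn_mul P.continuousOn isCompact_Icc) fun x hx => ?_
  rw [← sub_mul]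
  exact mul_le_mul_of_nonneg_right
    (by linarith [(abs_lt.1 (hP x (Ioo_subset_Icc_self hx))).1]) (hW0 x hx)

theorem tendsto_integral_continuous_mul (hV : ∀ᶠ i in l, IntegrableOn (V i) (Icc 0 1))
    (hV0 : ∀ᶠ i in l, ∀ x ∈ Ioo (0 : ℝ) 1, 0 ≤ V i x) (hW : IntegrableOn W (Icc 0 1))
    (hW0 : ∀ x ∈ Ioo (0 : ℝ) 1, 0 ≤ W x)
    (hmom : ∀ k : ℕ, Tendsto (fun i => ∫ x in Icc (0 : ℝ) 1, x ^ k * V i x) l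
      (𝓝 (∫ x in Icc (0 : ℝ) 1, x ^ k * W x))) {f : ℝ → ℝ} (hf : ContinuousOn f (Icc 0 1)) :
    Tendsto (fun i => ∫ x in Icc (0 : ℝ) 1, f x * V i x) l
      (𝓝 (∫ x in Icc (0 : ℝ) 1, f x * W x)) := by
  have lower {g : ℝ → ℝ} (hg : ContinuousOn g (Icc 0 1)) {a : ℝ}
      (ha : a < ∫ x in Icc (0 : ℝ) 1, g x * W x) :
      ∀ᶠ i in l, a < ∫ x in Icc (0 : ℝ) 1, g x * V i x := by
    obtain ⟨P, hPg, haP⟩ := exists_polynomial_le_of_lt_integral_mul hW hW0 hg ha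
    filter_upwards [(tendsto_integral_polynomial_mul hV hW hmom P).eventually_const_lt haP, hV, hV0]
      with i hai hi hi0
    exact hai.trans_le (setIntegral_Icc_mono_on_Ioo
      (hi.continuousOn_mul P.continuousOn isCompact_Icc) (hi.continuousOn_mul hg isCompact_Icc)
      fun x hx => mul_le_mul_of_nonneg_right (hPg x (Ioo_subset_Icc_self hx)) (hi0 x hx))
  refine tendsto_order.2 ⟨fun a ha => lower hf ha, fun a ha => ?_⟩
  have := lower hf.neg (a := -a) (by simpa [integral_neg] using ha)
  simpa [integral_neg] using this

theorem apply_mul_integral_le_of_monotoneOn {w g : ℝ → ℝ} {x₀ : ℝ} (hx₀ : x₀ ∈ Ioo (0 : ℝ) 1)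
    (hw : IntegrableOn w (Icc 0 1)) (hmono : MonotoneOn w (Ioo 0 1))
    (hg : ContinuousOn g (Icc 0 1)) (hneg : ∀ x < x₀, g x ≤ 0) (hpos : ∀ x > x₀, 0 ≤ g x) :
    w x₀ * ∫ x in Icc (0 : ℝ) 1, g x ≤ ∫ x in Icc (0 : ℝ) 1, g x * w x := by
  rw [← integral_const_mul]
  refine setIntegral_Icc_mono_on_Ioo (hg.integrableOn_Icc.const_mul (w x₀))
    (hw.continuousOn_mul hg isCompact_Icc) fun x hx => ?_
  rw [mul_comm]
  rcases lt_trichotomy x x₀ with hlt | rfl | hgt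
  · exact mul_le_mul_of_nonpos_left (hmono hx hx₀ hlt.le) (hneg x hlt)
  · exact le_rfl
  · exact mul_le_mul_of_nonneg_left (hmono hx₀ hx hgt.le) (hpos x hgt)

theorem integral_max_zero_sub_pos {x₀ : ℝ} (hx₀ : x₀ ∈ Ioo (0 : ℝ) 1) :
    0 < ∫ x in Icc (0 : ℝ) 1, max 0 (x - x₀) := by
  rw [integral_Icc_eq_integral_Ioc, ← intervalIntegral.integral_of_le zero_le_one]
  exact intervalIntegral.integral_pos zero_lt_one (by fun_prop) (fun x _ => le_max_left 0 _)
    ⟨1, right_mem_Icc.2 zero_le_one, lt_max_of_lt_right (sub_pos.2 hx₀.2)⟩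

theorem integral_min_zero_sub_neg {x₀ : ℝ} (hx₀ : x₀ ∈ Ioo (0 : ℝ) 1) :
    ∫ x in Icc (0 : ℝ) 1, min 0 (x - x₀) < 0 := by
  rw [← neg_pos, ← integral_neg, integral_Icc_eq_integral_Ioc,
    ← intervalIntegral.integral_of_le zero_le_one]
  exact intervalIntegral.integral_pos zero_lt_one (by fun_prop)
    (fun x _ => neg_nonneg.2 (min_le_left 0 _))
    ⟨0, left_mem_Icc.2 zero_le_one, neg_pos.2 (min_lt_of_right_lt (sub_neg.2 hx₀.1))⟩

theorem tendsto_apply_of_monotoneOn_of_moments {C x₀ : ℝ} (hx₀ : x₀ ∈ Ioo (0 : ℝ) 1) (hC : 0 ≤ C)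
    (hV : ∀ᶠ i in l, IntegrableOn (V i) (Icc 0 1))
    (hV0 : ∀ᶠ i in l, ∀ x ∈ Ioo (0 : ℝ) 1, 0 ≤ V i x)
    (hmono : ∀ᶠ i in l, MonotoneOn (V i) (Ioo 0 1))
    (hmom : ∀ k : ℕ, Tendsto (fun i => ∫ x in Icc (0 : ℝ) 1, x ^ k * V i x) l
      (𝓝 (∫ x in Icc (0 : ℝ) 1, x ^ k * C))) :
    Tendsto (fun i => V i x₀) l (𝓝 C) := by
  have tendsto_ratio {g : ℝ → ℝ} (hg : Continuous g) (hg0 : ∫ x in Icc (0 : ℝ) 1, g x ≠ 0) :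
      Tendsto (fun i => (∫ x in Icc (0 : ℝ) 1, g x * V i x) / ∫ x in Icc (0 : ℝ) 1, g x) l
        (𝓝 C) := by
    have := (tendsto_integral_continuous_mul hV hV0 (integrableOn_const (by simp)) (fun _ _ => hC)
      hmom hg.continuousOn).div_const (∫ x in Icc (0 : ℝ) 1, g x)
    rwa [integral_mul_const, mul_div_cancel_left₀ _ hg0] at this
  have hmin := integral_min_zero_sub_neg hx₀
  have hmax := integral_max_zero_sub_pos hx₀
  refine tendsto_of_tendsto_of_tendsto_of_le_of_le' (tendsto_ratio (by fun_prop) hmin.ne)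
    (tendsto_ratio (by fun_prop) hmax.ne') ?_ ?_
  · filter_upwards [hV, hmono] with i hi hmi
    rw [div_le_iff_of_neg hmin]
    exact apply_mul_integral_le_of_monotoneOn hx₀ hi hmi (by fun_prop) (fun x _ => min_le_left 0 _)
      fun x hx => le_min le_rfl (sub_pos.2 hx).le
  · filter_upwards [hV, hmono] with i hi hmi
    rw [le_div_iff₀ hmax]
    exact apply_mul_integral_le_of_monotoneOn hx₀ hi hmi (by fun_prop)
      (fun x hx => max_le le_rfl (sub_neg.2 hx).le) fun x _ => le_max_left 0 _

end Moments

/-! ### Laplace transforms -/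

/-- The Laplace transform `∫₀^∞ e^{-pt} u(t) dt`, with value `0` where it does not converge
absolutely. -/
noncomputable def laplaceTransform (u : ℝ → ℝ) (p : ℝ) : ℝ :=
  ∫ t in Ioi (0 : ℝ), Real.exp (-p * t) * u t

section Laplace

variable {u : ℝ → ℝ} {T : ℝ}

theorem image_exp_neg_Ioi_zero : (fun t : ℝ => Real.exp (-t)) '' Ioi 0 = Ioo 0 1 := by
  have : (fun t : ℝ => Real.exp (-t)) '' Ioi 0 = Real.exp '' (Neg.neg '' Ioi 0) :=
    (image_image Real.exp Neg.neg _).symm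
  rw [this, image_neg_Ioi, neg_zero, Real.image_exp_Iio, Real.exp_zero]

theorem hasDerivWithinAt_exp_neg (t : ℝ) (s : Set ℝ) :
    HasDerivWithinAt (fun t : ℝ => Real.exp (-t)) (-Real.exp (-t)) s t := by
  simpa using (hasDerivAt_neg t).exp.hasDerivWithinAt

theorem integral_Icc_zero_one_eq_integral_exp_neg (f : ℝ → ℝ) :
    ∫ x in Icc (0 : ℝ) 1, f x = ∫ t in Ioi 0, Real.exp (-t) * f (Real.exp (-t)) := by
  rw [integral_Icc_eq_integral_Ioo, ← image_exp_neg_Ioi_zero,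
    integral_image_eq_integral_abs_deriv_smul measurableSet_Ioi
      (fun t _ => hasDerivWithinAt_exp_neg t _) (Real.exp_injective.comp neg_injective).injOn]
  simp only [abs_neg, Real.abs_exp, smul_eq_mul]

theorem integrableOn_Icc_zero_one_iff_exp_neg (f : ℝ → ℝ) :
    IntegrableOn f (Icc (0 : ℝ) 1) ↔
      IntegrableOn (fun t => Real.exp (-t) * f (Real.exp (-t))) (Ioi 0) := by
  rw [integrableOn_Icc_iff_integrableOn_Ioo, ← image_exp_neg_Ioi_zero,
    integrableOn_image_iff_integrableOn_abs_deriv_smul measurableSet_Ioi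
      (fun t _ => hasDerivWithinAt_exp_neg t _) (Real.exp_injective.comp neg_injective).injOn]
  simp only [abs_neg, Real.abs_exp, smul_eq_mul]

theorem integral_pow_mul_comp_neg_log (hT : 0 < T) (k : ℕ) :
    ∫ x in Icc (0 : ℝ) 1, x ^ k * u (T * -Real.log x) =
      T⁻¹ * laplaceTransform u ((k + 1) / T) := by
  have hscale := integral_comp_mul_left_Ioi
    (fun t => Real.exp (-((k + 1) / T) * t) * u t) 0 hT
  rw [mul_zero, smul_eq_mul] at hscale
  rw [integral_Icc_zero_one_eq_integral_exp_neg, laplaceTransform, ← hscale]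
  congr 1 with t
  rw [Real.log_exp, neg_neg, ← Real.exp_nat_mul, ← mul_assoc, ← Real.exp_add]
  congr 2
  field_simp
  ring

theorem integrableOn_comp_neg_log (hT : 0 < T)
    (hu : IntegrableOn (fun t => Real.exp (-T⁻¹ * t) * u t) (Ioi 0)) :
    IntegrableOn (fun x => u (T * -Real.log x)) (Icc 0 1) := by
  rw [integrableOn_Icc_zero_one_iff_exp_neg]
  have hscale := (integrableOn_Ioi_comp_mul_left_iff
    (fun t => Real.exp (-T⁻¹ * t) * u t) 0 hT).2 (by rwa [mul_zero])
  convert hscale using 2 with t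
  rw [Real.log_exp, neg_neg, neg_mul, inv_mul_cancel_left₀ hT.ne']

theorem natCast_mul_integral_pow_mul_comp_neg_log (k : ℕ) :
    k * ∫ x in Icc (0 : ℝ) 1, x ^ (k - 1) * u (-Real.log x) = k * laplaceTransform u k := by
  cases k with
  | zero => simp
  | succ k =>
    have := integral_pow_mul_comp_neg_log (u := u) zero_lt_one k
    simp only [one_mul, inv_one, div_one] at this
    rw [Nat.add_sub_cancel, this, Nat.cast_add_one]

theorem continuousOn_comp_neg_log (hu : ContinuousOn u (Ioi 0)) :
    ContinuousOn (fun x => u (-Real.log x)) (Ioo 0 1) :=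
  hu.comp (Real.continuousOn_log.mono fun _ hx => hx.1.ne').neg
    fun _ hx => neg_pos.2 (Real.log_neg hx.1 hx.2)

theorem exp_neg_mem_Ioo {t : ℝ} (ht : 0 < t) : Real.exp (-t) ∈ Ioo (0 : ℝ) 1 :=
  image_exp_neg_Ioi_zero ▸ mem_image_of_mem _ ht

theorem antitoneOn_of_laplaceTransform {ψ : ℕ → ℝ} (hu : ContinuousOn u (Ioi 0))
    (hint : IntegrableOn (fun t => Real.exp (-t) * u t) (Ioi 0)) (hψ : CompletelyMonotone ψ)
    (hlap : ∀ k : ℕ, k * laplaceTransform u k = 1 - ψ k) : AntitoneOn u (Ioi 0) := by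
  have hmono := monotoneOn_of_moments (v := fun x => u (-Real.log x))
    (by simpa using integrableOn_comp_neg_log (u := u) zero_lt_one (by simpa using hint))
    (continuousOn_comp_neg_log hu) hψ
    fun k => (natCast_mul_integral_pow_mul_comp_neg_log k).trans (hlap k)
  intro s hs t ht hst
  simpa using hmono (exp_neg_mem_Ioo ht) (exp_neg_mem_Ioo hs)
    (Real.exp_le_exp.2 (neg_le_neg hst))

theorem nonneg_of_laplaceTransform {ψ : ℕ → ℝ} (hu : ContinuousOn u (Ioi 0))
    (hint : IntegrableOn (fun t => Real.exp (-t) * u t) (Ioi 0)) (hψ : CompletelyMonotone ψ)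
    (hlap : ∀ k : ℕ, k * laplaceTransform u k = 1 - ψ k) {t : ℝ} (ht : 0 < t) : 0 ≤ u t := by
  simpa using nonneg_of_moments (v := fun x => u (-Real.log x))
    (by simpa using integrableOn_comp_neg_log (u := u) zero_lt_one (by simpa using hint))
    (continuousOn_comp_neg_log hu) hψ
    (fun k => (natCast_mul_integral_pow_mul_comp_neg_log k).trans (hlap k)) (exp_neg_mem_Ioo ht)

theorem integral_Icc_pow_mul_const (k : ℕ) (C : ℝ) :
    ∫ x in Icc (0 : ℝ) 1, x ^ k * C = C / (k + 1) := by
  rw [integral_mul_const, integral_Icc_eq_integral_Ioc,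
    ← intervalIntegral.integral_of_le zero_le_one, integral_pow]
  simp [div_eq_inv_mul]

-- Under `x = e^{-t/T}` the claim concerns the monotone functions `x ↦ L T * u (-T log x)` at
-- `x = e⁻¹`, and `hlim` says that their moments converge to those of the constant `C`.
theorem tendsto_of_tendsto_laplaceTransform {L : ℝ → ℝ} {C : ℝ} (hu : AntitoneOn u (Ioi 0))
    (hu0 : ∀ t > 0, 0 ≤ u t)
    (hint : ∀ p > 0, IntegrableOn (fun t => Real.exp (-p * t) * u t) (Ioi 0))
    (hL : ∀ᶠ T in atTop, 0 ≤ L T)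
    (hlim : ∀ q > 0, Tendsto (fun T => L T * (q / T * laplaceTransform u (q / T))) atTop (𝓝 C)) :
    Tendsto (fun T => L T * u T) atTop (𝓝 C) := by
  have neg_log_pos {T x : ℝ} (hT : 0 < T) (hx : x ∈ Ioo (0 : ℝ) 1) : 0 < T * -Real.log x :=
    mul_pos hT (neg_pos.2 (Real.log_neg hx.1 hx.2))
  have hC : 0 ≤ C := by
    refine ge_of_tendsto (hlim 1 zero_lt_one) ?_
    filter_upwards [hL, eventually_gt_atTop 0] with T hLT hT
    exact mul_nonneg hLT (mul_nonneg (by positivity)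
      (setIntegral_nonneg measurableSet_Ioi fun t ht => mul_nonneg (Real.exp_pos _).le (hu0 t ht)))
  have hmom (k : ℕ) : Tendsto
      (fun T => ∫ x in Icc (0 : ℝ) 1, x ^ k * (L T * u (T * -Real.log x))) atTop
      (𝓝 (∫ x in Icc (0 : ℝ) 1, x ^ k * C)) := by
    rw [integral_Icc_pow_mul_const]
    refine ((hlim (k + 1) (by positivity)).div_const (k + 1)).congr' ?_
    filter_upwards [eventually_gt_atTop 0] with T hT
    simp only [mul_left_comm _ (L T)]
    rw [integral_const_mul, integral_pow_mul_comp_neg_log hT]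
    field_simp
  have := tendsto_apply_of_monotoneOn_of_moments (exp_neg_mem_Ioo zero_lt_one) hC ?_ ?_ ?_ hmom
  · simpa only [Real.log_exp, neg_neg, mul_one] using this
  · filter_upwards [eventually_gt_atTop 0] with T hT
    exact (integrableOn_comp_neg_log hT (hint _ (inv_pos.2 hT))).const_mul (L T)
  · filter_upwards [hL, eventually_gt_atTop 0] with T hLT hT x hx
    exact mul_nonneg hLT (hu0 _ (neg_log_pos hT hx))
  · filter_upwards [hL, eventually_gt_atTop 0] with T hLT hT x hx y hy hxy
    refine mul_le_mul_of_nonneg_left (hu (neg_log_pos hT hy) (neg_log_pos hT hx) ?_) hLT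
    exact mul_le_mul_of_nonneg_left (neg_le_neg (Real.log_le_log hx.1 hxy)) hT.le

end Laplace

theorem relaxation_solution_log_decay_general {μ u : ℝ → ℝ} {m lam : ℝ}
    (hμ : IntegrableOn μ (Ioc 0 1)) (hμ0 : ∀ α ∈ Ioc (0 : ℝ) 1, 0 ≤ μ α)
    (hm : Tendsto μ (𝓝[>] 0) (𝓝 m)) (hlam : lam < 0) (hu : ContinuousOn u (Ioi 0))
    (hlap : ∀ p > 0, IntegrableOn (fun t => Real.exp (-p * t) * u t) (Ioi 0) ∧
      laplaceTransform u p = Kreal μ p / (p * Kreal μ p - lam)) :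
    Tendsto (fun t => Real.log t * u t) atTop (𝓝 (m / -lam)) := by
  have hc : 0 < -lam := neg_pos.2 hlam
  have hmul (p : ℝ) (hp : 0 ≤ p) :
      p * laplaceTransform u p = orderSymbol μ p / (orderSymbol μ p + -lam) := by
    rcases hp.eq_or_lt with rfl | hp
    · rw [zero_mul, orderSymbol_zero, zero_div]
    · rw [(hlap p hp).2, mul_div_assoc', mul_Kreal hp, sub_eq_add_neg]
  have hψ := completelyMonotone_div_orderSymbol_add hμ hμ0 hc
  have hlapψ (k : ℕ) : k * laplaceTransform u k = 1 - -lam / (orderSymbol μ k + -lam) := by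
    have := add_pos_of_nonneg_of_pos (orderSymbol_nonneg hμ0 k.cast_nonneg) hc
    rw [hmul k k.cast_nonneg, one_sub_div this.ne', add_sub_cancel_right]
  have hint : IntegrableOn (fun t => Real.exp (-t) * u t) (Ioi 0) := by
    simpa only [neg_one_mul] using (hlap 1 zero_lt_one).1
  refine tendsto_of_tendsto_laplaceTransform (antitoneOn_of_laplaceTransform hu hint hψ hlapψ)
    (fun t => nonneg_of_laplaceTransform hu hint hψ hlapψ) (fun p hp => (hlap p hp).1)
    ((eventually_ge_atTop 1).mono fun T => Real.log_nonneg) fun q hq => ?_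
  refine (tendsto_log_mul_orderSymbol_div hμ hm hc.ne' hq).congr' ?_
  filter_upwards [eventually_gt_atTop 0] with T hT
  rw [hmul _ (div_pos hq hT).le]

theorem relaxation_solution_log_decay (μ : ℝ → ℝ)
    (hc : ContinuousOn μ (Set.Icc 0 1))
    (hnn : ∀ α ∈ Set.Icc (0:ℝ) 1, 0 ≤ μ α)
    (hne : ∃ α ∈ Set.Icc (0:ℝ) 1, μ α ≠ 0)
    (hC2 : ContDiffOn ℝ 2 μ (Set.Icc 0 1))
    (h1 : μ 1 ≠ 0) (h0 : μ 0 ≠ 0)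
    (lam : ℝ) (hlam : lam < 0)
    (u : ℝ → ℝ) (hu : ContinuousOn u (Set.Ioi 0))
    (hloc : LocallyIntegrableOn u (Set.Ioi 0))
    (hlap : ∀ p : ℝ, 0 < p →
      IntegrableOn (fun t : ℝ => Real.exp (-p * t) * u t) (Set.Ioi 0) ∧
      ∫ t in Set.Ioi (0:ℝ), Real.exp (-p * t) * u t
        = Kreal μ p / (p * Kreal μ p - lam)) :
    Tendsto (fun t : ℝ => Real.log t * u t) atTop (nhds (μ 0 / (-lam))) :=
  relaxation_solution_log_decay_general (hc.integrableOn_Icc.mono_set Ioc_subset_Icc_self)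
    (fun α hα => hnn α (Ioc_subset_Icc_self hα))
    ((hc 0 (left_mem_Icc.2 zero_le_one)).mono_left
      (nhdsWithin_le_of_mem (Icc_mem_nhdsGT zero_lt_one)))
    hlam hu hlap
end
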